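/- Let $a > 0$, $\nu \in \mathbb{C}$ with $0 < \mathrm{Re}\,\nu < 1/2$, $-1 < \mu < 0$, and let $g \in \mathcal{M}_{0,1}^{-1}(L_c)$ with $c$ the line $\mathrm{Re}\,s = \mu$. Then for every $w \in \mathbb{C}$ with $-1/2 > \mathrm{Re}\,w > \mu + 2\,\mathrm{Re}\,\nu$, $\dfrac{\cos(\pi\nu)}{2\pi^3\sqrt{\pi}\, i} \int_{\mu - i\infty}^{\mu + i\infty} g^*(s)\, \Gamma\big(\tfrac{1 + s - w}{2}\big)\, \Gamma\big(\tfrac{w - s}{2}\big)\, \Gamma\big(\tfrac{w - s}{2} - \nu\big)\, \Gamma\big(\tfrac{w - s}{2} + \nu\big)\, a^{s - w}\, ds = \int_0^\infty g(x)\, \big[ J_\nu^2(ax) + Y_\nu^2(ax) \big]\, x^{w - 1}\, dx$. -/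

import Mathlib

/-!
The identity is Parseval's formula for the Mellin transform. On the line `Re s = μ` the function
`g` is the inverse Mellin integral of `gs`; inserting this into the right-hand side and exchanging
the integrals (`gs` is integrable on the line because `s * gs s` is and `μ ≠ 0`) reduces the claim
to the Mellin transform of the kernel (`mellin_weber`), for `2 Re ν < Re U < 1`,
`√π π² ∫₀^∞ (J_ν² + Y_ν²)(x) x^(U-1) dx
  = cos(πν) Γ(U/2) Γ((1-U)/2) Γ(U/2+ν) Γ(U/2-ν)`, taken at `U = w - s`.

That transform comes from Nicholson's formula (`nicholson`)
`π² (J_ν² + Y_ν²)(x) = ∬ exp(-νσ) exp(-e^y - x² ((cosh σ - 1)/2) e^(-y)) dσ dy`.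
After Fubini the `x`-integral is Gaussian, the `y`-integral is `Γ(U/2)`, and the two halves of the
`σ`-integral become Beta integrals under `v = e^(-|σ|)`; reflection and duplication combine the
Gamma factors (`beta_add_beta`). Absolute convergence of the triple integral is the same
computation with `ν` and `U` replaced by their real parts. In particular the integrability that
Nicholson's formula requires is obtained from Fubini, for almost every `x`, which is enough.

Nicholson's formula rests on Macdonald's formula (`macdonald`)
`∫ exp(-2ζ cosh s - νs) ds = (π / sin πν) (I_{-ν}(2ζ) - I_ν(2ζ))` for `Re ζ > 0`. Each half-line
piece of the left-hand side expands through the incomplete Gamma function into a Bessel series plus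
a double series that is odd in `ν`, so that the double series cancels between the two pieces. The
product of two Macdonald integrals at the conjugate points `(x/2)(ε ± i)` is a convolution; a
rotation of the contour (`integral_rotate`) makes its integrand real up to the factor `exp(-νσ)`
(`macdonaldRHS_mul_eq_integral`). As `ε → 0` the arguments reach the imaginary axis, where the
product is `π² (J_ν² + Y_ν²)` (`macdonaldRHS_mul`).
-/

open MeasureTheory Filter Set Topology Complex intervalIntegral

/-- Bessel function of the first kind of complex order `ν`. -/
noncomputable def besselJ (ν z : ℂ) : ℂ :=
  ∑' n : ℕ, ((-1 : ℂ) ^ n / (Complex.Gamma (n + 1) * Complex.Gamma (n + ν + 1))) *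
    (z / 2) ^ (2 * (n : ℂ) + ν)

/-- Bessel function of the second kind of complex order `ν`, defined by the usual
limit formula (which for non-integer order reduces to
`(J ν z * cos (π ν) - J (-ν) z) / sin (π ν)`). -/
noncomputable def besselY (ν z : ℂ) : ℂ :=
  limUnder (𝓝[≠] ν) fun μ =>
    (besselJ μ z * Complex.cos (Real.pi * μ) - besselJ (-μ) z) / Complex.sin (Real.pi * μ)

/-- The Weber kernel `C_ν(α, β) = J_ν(α) Y_ν(β) - Y_ν(α) J_ν(β)`. -/
noncomputable def weberC (ν α β : ℂ) : ℂ :=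
  besselJ ν α * besselY ν β - besselY ν α * besselJ ν β

/-- Gauss hypergeometric series `₂F₁(a, b; c; z)`. -/
noncomputable def hyp2F1 (a b c z : ℂ) : ℂ :=
  ∑' n : ℕ, ((ascPochhammer ℂ n).eval a * (ascPochhammer ℂ n).eval b /
    ((ascPochhammer ℂ n).eval c * (n.factorial : ℂ))) * z ^ n

/-- The associated Legendre function of the second kind `Q_μ^ν(z)` (order `ν`, degree `μ`),
for `z` off the cut `(-∞, 1]`. -/
noncomputable def legendreQ (ν μ z : ℂ) : ℂ :=
  Complex.exp (ν * Real.pi * Complex.I) * (Real.sqrt Real.pi : ℂ) * 2 ^ (-μ - 1) *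
    (Complex.Gamma (μ + ν + 1) / Complex.Gamma (μ + 3 / 2)) *
    z ^ (-μ - ν - 1) * (z ^ 2 - 1) ^ (ν / 2) *
    hyp2F1 ((μ + ν + 2) / 2) ((μ + ν + 1) / 2) (μ + 3 / 2) (1 / z ^ 2)

/-- `g` belongs to the class `𝓜₀,₁⁻¹(L_c)` on the vertical line `Re s = μ`, with Mellin
transform `gs`:  `s ↦ s * gs s` is integrable on the line, and `g` is recovered from `gs`
by the inverse Mellin transform. -/
def MellinClass01 (μ : ℝ) (g : ℝ → ℂ) (gs : ℂ → ℂ) : Prop :=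
  (Integrable fun τ : ℝ => ((μ : ℂ) + τ * Complex.I) * gs ((μ : ℂ) + τ * Complex.I)) ∧
  ∀ x : ℝ, 0 < x →
    g x = (2 * Real.pi * Complex.I)⁻¹ *
      (Complex.I * ∫ τ : ℝ, gs ((μ : ℂ) + τ * Complex.I) * (x : ℂ) ^ (-((μ : ℂ) + τ * Complex.I)))

/-! ### Exponential integrals over the real line -/

lemma integral_comp_exp_univ (g : ℝ → ℂ) :
    ∫ t : ℝ, (Real.exp t : ℂ) * g (Real.exp t) = ∫ y in Ioi (0 : ℝ), g y := by
  have h := integral_image_eq_integral_abs_deriv_smul (f := Real.exp) (f' := Real.exp)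
    MeasurableSet.univ (fun x _ => (Real.hasDerivAt_exp x).hasDerivWithinAt)
    Real.exp_injective.injOn g
  rw [image_univ, Real.range_exp, setIntegral_univ] at h
  rw [h]
  refine integral_congr_ae (Eventually.of_forall fun t => ?_)
  simp [abs_of_pos (Real.exp_pos t)]

lemma integrable_comp_exp_univ (g : ℝ → ℂ) :
    Integrable (fun t : ℝ => (Real.exp t : ℂ) * g (Real.exp t)) ↔ IntegrableOn g (Ioi (0 : ℝ)) := by
  have h := integrableOn_image_iff_integrableOn_abs_deriv_smul (f := Real.exp) (f' := Real.exp)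
    MeasurableSet.univ (fun x _ => (Real.hasDerivAt_exp x).hasDerivWithinAt)
    Real.exp_injective.injOn g
  rw [image_univ, Real.range_exp, integrableOn_univ] at h
  rw [h]
  refine integrable_congr (Eventually.of_forall fun t => ?_)
  simp [abs_of_pos (Real.exp_pos t)]

lemma exp_mul_gamma_integrand (a : ℂ) (t : ℝ) :
    (Real.exp t : ℂ) * (cexp (-(Real.exp t : ℝ)) * ((Real.exp t : ℝ) : ℂ) ^ (a - 1))
      = cexp (-cexp t + a * t) := by
  rw [cpow_def_of_ne_zero (by exact_mod_cast (Real.exp_pos t).ne'), ← ofReal_log (Real.exp_pos t).le,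
    Real.log_exp, ofReal_exp, ← Complex.exp_add, ← Complex.exp_add]
  ring_nf

/-- Euler's integral for `Γ` in the variable `t = log x`. -/
lemma integral_exp_neg_exp {a : ℂ} (ha : 0 < a.re) :
    ∫ t : ℝ, cexp (-cexp t + a * t) = Complex.Gamma a := by
  rw [Complex.Gamma_eq_integral ha, Complex.GammaIntegral, ← integral_comp_exp_univ]
  exact integral_congr_ae (Eventually.of_forall fun t => (by
    have := exp_mul_gamma_integrand a t
    push_cast at this ⊢
    exact this.symm))

lemma norm_cexp_exp_lin (a : ℂ) (t : ℝ) :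
    ‖cexp (-cexp t + a * t)‖ = Real.exp (-Real.exp t + a.re * t) := by
  rw [Complex.norm_exp]; simp [Complex.exp_re]

lemma integrable_cexp_exp_lin {a : ℂ} (ha : 0 < a.re) :
    Integrable fun t : ℝ => cexp (-cexp t + a * t) := by
  have := (integrable_comp_exp_univ _).2 (Complex.GammaIntegral_convergent ha)
  refine this.congr (Eventually.of_forall fun t => ?_)
  have := exp_mul_gamma_integrand a t
  push_cast at this ⊢
  exact this

lemma integrable_exp_lin {ε α : ℝ} (hε : 0 < ε) (hα : 0 < α) :
    Integrable fun t : ℝ => Real.exp (-ε * Real.exp t + α * t) := by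
  have h := (integrable_cexp_exp_lin (a := α) (by simpa using hα)).norm
  simp only [norm_cexp_exp_lin, ofReal_re] at h
  have h2 := (h.comp_add_right (Real.log ε)).const_mul (Real.exp (-α * Real.log ε))
  refine h2.congr (Eventually.of_forall fun t => ?_)
  simp only
  rw [← Real.exp_add, Real.exp_add t, Real.exp_log hε]
  ring_nf

/-- Two-sided double-exponential decay beats any exponential factor; when the decay at `-∞` is
switched off (`δ = 0`), a positive exponent takes over. -/
lemma integrable_exp_two {ε δ α : ℝ} (hε : 0 < ε) (hδ : 0 ≤ δ) (h : 0 < δ ∨ 0 < α) :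
    Integrable fun t : ℝ => Real.exp (-ε * Real.exp t - δ * Real.exp (-t) + α * t) := by
  by_cases hα : 0 < α
  · refine (integrable_exp_lin hε hα).mono' (by fun_prop) (Eventually.of_forall fun t => ?_)
    rw [Real.norm_eq_abs, abs_of_pos (Real.exp_pos _), Real.exp_le_exp]
    have := mul_nonneg hδ (Real.exp_pos (-t)).le
    linarith
  · have hδ : 0 < δ := by tauto
    obtain ⟨n, hn⟩ := exists_nat_gt (-α)
    have h2 := (integrable_exp_lin hε (α := n + α) (by linarith)).const_mul (n.factorial / δ ^ n)
    refine h2.mono' (by fun_prop) (Eventually.of_forall fun t => ?_)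
    rw [Real.norm_eq_abs, abs_of_pos (Real.exp_pos _)]
    -- `exp (-y) ≤ n! / y ^ n` at `y = δ * exp (-t)`
    have key : Real.exp (-(δ * Real.exp (-t))) ≤ n.factorial / δ ^ n * Real.exp (n * t) := by
      have hy : 0 < δ * Real.exp (-t) := by positivity
      have h3 := Real.pow_div_factorial_le_exp (δ * Real.exp (-t)) hy.le n
      have hf : (0 : ℝ) < n.factorial := by positivity
      rw [Real.exp_neg, inv_le_comm₀ (Real.exp_pos _) (by positivity)]
      refine le_trans (le_of_eq ?_) h3
      rw [mul_pow, ← Real.exp_nat_mul, mul_neg, Real.exp_neg]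
      field_simp
    calc Real.exp (-ε * Real.exp t - δ * Real.exp (-t) + α * t)
        = Real.exp (-ε * Real.exp t + α * t) * Real.exp (-(δ * Real.exp (-t))) := by
          rw [← Real.exp_add]; ring_nf
      _ ≤ Real.exp (-ε * Real.exp t + α * t) * (n.factorial / δ ^ n * Real.exp (n * t)) := by gcongr
      _ = _ := by
          rw [mul_left_comm, ← Real.exp_add]; ring_nf

/-- Invariance of line integrals under vertical translation in a strip, for an entire function
dominated, with its derivative, by a fixed integrable function. -/
lemma integral_vertical_shift {F F' : ℂ → ℂ} (hF : ∀ z, HasDerivAt F (F' z) z)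
    (hF' : Continuous F') {φ₀ : ℝ} {B : ℝ → ℝ} (hB : Integrable B)
    (h1 : ∀ φ : ℝ, |φ| < φ₀ → ∀ t : ℝ, ‖F (t + φ * I)‖ ≤ B t)
    (h2 : ∀ φ : ℝ, |φ| < φ₀ → ∀ t : ℝ, ‖F' (t + φ * I)‖ ≤ B t)
    {φ : ℝ} (hφ : |φ| < φ₀) :
    ∫ t : ℝ, F (t + φ * I) = ∫ t : ℝ, F t := by
  have hFc : Continuous F := continuous_iff_continuousAt.2 fun z => (hF z).continuousAt
  have hφ0 : 0 < φ₀ := (abs_nonneg φ).trans_lt hφ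
  have hint : ∀ ψ : ℝ, |ψ| < φ₀ → Integrable fun t : ℝ => F (t + ψ * I) := fun ψ hψ =>
    hB.mono' (by fun_prop) (Eventually.of_forall (h1 ψ hψ))
  have hint' : ∀ ψ : ℝ, |ψ| < φ₀ → Integrable fun t : ℝ => F' (t + ψ * I) := fun ψ hψ =>
    hB.mono' (by fun_prop) (Eventually.of_forall (h2 ψ hψ))
  -- The `ψ`-derivative of the line integral is the integral of a total `t`-derivative, hence zero.
  have hd : ∀ ψ ∈ Ioo (-φ₀) φ₀, HasDerivAt (fun ψ : ℝ => ∫ t : ℝ, F (t + ψ * I)) 0 ψ := by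
    intro ψ hψ
    have hψ' := abs_lt.2 hψ
    have hs : Ioo (-φ₀) φ₀ ∈ 𝓝 ψ := isOpen_Ioo.mem_nhds hψ
    have := (hasDerivAt_integral_of_dominated_loc_of_deriv_le (𝕜 := ℝ) (μ := volume)
      (F := fun (ψ : ℝ) (t : ℝ) => F (t + ψ * I)) (F' := fun (ψ : ℝ) (t : ℝ) => F' (t + ψ * I) * I)
      (bound := B) hs (Eventually.of_forall fun x => by fun_prop) (hint ψ hψ') (by fun_prop)
      (Eventually.of_forall fun t x hx => by simpa using h2 x (abs_lt.2 hx) t) hB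
      (Eventually.of_forall fun t x hx => by
        have h3 : HasDerivAt (fun x : ℝ => (t : ℂ) + x * I) I x := by
          simpa using ((hasDerivAt_id x).ofReal_comp.mul_const I).const_add (t : ℂ)
        exact (hF (t + x * I)).comp x h3)).2
    have h0 : ∫ t : ℝ, F' (t + ψ * I) * I = 0 := by
      rw [MeasureTheory.integral_mul_const]
      have h4 : ∫ t : ℝ, F' (t + ψ * I) = 0 := by
        refine integral_eq_zero_of_hasDerivAt_of_integrable (f := fun t : ℝ => F (t + ψ * I))
          (fun t => ?_) (hint' ψ hψ') (hint ψ hψ')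
        have h3 : HasDerivAt (fun t : ℝ => (t : ℂ) + ψ * I) 1 t := by
          simpa using (hasDerivAt_id t).ofReal_comp.add_const (ψ * I)
        have h5 := (hF (t + ψ * I)).comp t h3
        rw [mul_one] at h5
        exact h5
      rw [h4, zero_mul]
    rwa [h0] at this
  have := IsOpen.is_const_of_deriv_eq_zero (𝕜 := ℝ) isOpen_Ioo isPreconnected_Ioo
    (fun x hx => (hd x hx).differentiableAt.differentiableWithinAt)
    (fun x hx => (hd x hx).deriv) (abs_lt.1 hφ) (show (0 : ℝ) ∈ Ioo (-φ₀) φ₀ by simp [hφ0])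
  simpa using this

lemma norm_cexp_two (c a : ℂ) (d : ℂ) (t : ℝ) :
    ‖cexp (-c * cexp t - d * cexp (-t) + a * t)‖
      = Real.exp (-c.re * Real.exp t - d.re * Real.exp (-t) + a.re * t) := by
  rw [Complex.norm_exp]; simp [Complex.exp_re, Complex.exp_im]

lemma integrable_cexp_two {c d a : ℂ} (hc : 0 < c.re) (hd : 0 ≤ d.re) (h : 0 < d.re ∨ 0 < a.re) :
    Integrable fun t : ℝ => cexp (-c * cexp t - d * cexp (-t) + a * t) := by
  refine (integrable_norm_iff (by fun_prop)).1 ?_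
  simp only [norm_cexp_two]
  exact integrable_exp_two hc hd h

/-- Rotation of the scaling parameter `c` in the right half-plane, keeping the product `P` of the
coefficients of `exp t` and `exp (-t)` fixed. -/
lemma integral_rotate {c a : ℂ} {P : ℝ} (hc : 0 < c.re) (hP : 0 ≤ P) (h : 0 < P ∨ 0 < a.re) :
    ∫ t : ℝ, cexp (-c * cexp t - (P / c) * cexp (-t) + a * t)
      = c ^ (-a) * ∫ t : ℝ, cexp (-cexp t - P * cexp (-t) + a * t) := by
  have hc0 : c ≠ 0 := by rintro rfl; simp at hc
  set F : ℂ → ℂ := fun z => cexp (-cexp z - P * cexp (-z) + a * z) with hFdef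
  set F' : ℂ → ℂ := fun z => (-cexp z + P * cexp (-z) + a) * F z with hF'def
  have hF : ∀ z, HasDerivAt F (F' z) z := by
    intro z
    have := (((Complex.hasDerivAt_exp z).neg.sub
      (((Complex.hasDerivAt_exp (-z)).comp z (hasDerivAt_neg z)).const_mul (P : ℂ))).add
      ((hasDerivAt_id z).const_mul a)).cexp
    convert! this using 1
    simp only [hF'def, hFdef, Function.comp, id, Pi.add_apply, Pi.sub_apply, Pi.neg_apply]
    ring_nf
  have harg : |c.arg| < Real.pi / 2 := abs_arg_lt_pi_div_two_iff.2 (Or.inl hc)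
  obtain ⟨φ₀, hφ1, hφ2⟩ := exists_between harg
  have hφ0 : 0 < φ₀ := (abs_nonneg _).trans_lt hφ1
  set ε := Real.cos φ₀ with hε
  have hε0 : 0 < ε := Real.cos_pos_of_mem_Ioo ⟨by linarith, hφ2⟩
  set K := Real.exp (|a.im| * φ₀) with hK
  set E : ℝ → ℝ → ℝ := fun β t => Real.exp (-ε * Real.exp t - (ε * P) * Real.exp (-t) + β * t)
    with hE
  set B : ℝ → ℝ := fun t => K * ((1 + ‖a‖) * E a.re t + E (a.re + 1) t + P * E (a.re - 1) t) with hBdef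
  have hBint : Integrable B := by
    have e1 : Integrable (E a.re) := integrable_exp_two hε0 (by positivity)
      (h.imp (fun h => by positivity) id)
    have e2 : Integrable (E (a.re + 1)) := integrable_exp_two hε0 (by positivity)
      (h.imp (fun h => by positivity) fun h => by linarith)
    have e3 : Integrable (fun t => P * E (a.re - 1) t) := by
      rcases hP.eq_or_lt with h0 | h0
      · simp [← h0]
      · exact (integrable_exp_two hε0 (by positivity) (Or.inl (by positivity))).const_mul P
    exact (((e1.const_mul _).add e2).add e3).const_mul K
  have hre : ∀ φ t : ℝ, (cexp (t + φ * I)).re = Real.exp t * Real.cos φ := by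
    intro φ t; simp [Complex.exp_re]
  have hre' : ∀ φ t : ℝ, (cexp (-(t + φ * I))).re = Real.exp (-t) * Real.cos φ := by
    intro φ t; simp [Complex.exp_re]
  have hcos : ∀ φ : ℝ, |φ| < φ₀ → ε ≤ Real.cos φ := by
    intro φ hφ
    rw [hε, ← Real.cos_abs φ]
    exact Real.cos_le_cos_of_nonneg_of_le_pi (abs_nonneg _) (by linarith [Real.pi_pos]) hφ.le
  have hFb : ∀ φ : ℝ, |φ| < φ₀ → ∀ t : ℝ, ‖F (t + φ * I)‖ ≤ K * E a.re t := by
    intro φ hφ t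
    rw [hFdef, hE, hK]
    simp only
    rw [Complex.norm_exp, ← Real.exp_add, Real.exp_le_exp]
    have e1 : (-cexp (t + φ * I) - P * cexp (-(t + φ * I)) + a * (t + φ * I)).re
        = -(Real.exp t * Real.cos φ) - P * (Real.exp (-t) * Real.cos φ) + (a.re * t - a.im * φ) := by
      rw [add_re, sub_re, neg_re, hre, re_ofReal_mul, hre']
      simp
    rw [e1]
    have c1 := hcos φ hφ
    have c2 : Real.exp t * ε ≤ Real.exp t * Real.cos φ := by gcongr
    have c3 : P * (Real.exp (-t) * ε) ≤ P * (Real.exp (-t) * Real.cos φ) := by gcongr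
    have c4 : -(a.im * φ) ≤ |a.im| * φ₀ := by
      calc -(a.im * φ) ≤ |a.im * φ| := neg_le_abs _
        _ = |a.im| * |φ| := abs_mul _ _
        _ ≤ _ := by gcongr
    nlinarith
  have hEpos : ∀ β t, 0 < E β t := fun β t => Real.exp_pos _
  have hKpos : 0 < K := Real.exp_pos _
  have hE1 : ∀ t, Real.exp t * E a.re t = E (a.re + 1) t := by
    intro t; simp only [hE]; rw [← Real.exp_add]; ring_nf
  have hE2 : ∀ t, Real.exp (-t) * E a.re t = E (a.re - 1) t := by
    intro t; simp only [hE]; rw [← Real.exp_add]; ring_nf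
  -- Shift the contour by `arg c`; the remaining real translation by `log ‖c‖` turns `t` into
  -- `t + log c`. Bounds are needed up to some `φ₀` strictly between `|arg c|` and `π / 2`.
  have key := integral_vertical_shift hF (by rw [hF'def, hFdef]; fun_prop) hBint (φ₀ := φ₀)
    (fun φ hφ t => by
      refine (hFb φ hφ t).trans ?_
      simp only [hBdef]
      refine mul_le_mul_of_nonneg_left ?_ hKpos.le
      have := hEpos a.re t; have := hEpos (a.re + 1) t; have := hEpos (a.re - 1) t
      have := mul_nonneg hP (hEpos (a.re - 1) t).le
      have := mul_nonneg (norm_nonneg a) (hEpos a.re t).le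
      linarith)
    (fun φ hφ t => by
      have b1 : ‖-cexp (t + φ * I) + P * cexp (-(t + φ * I)) + a‖
          ≤ Real.exp t + P * Real.exp (-t) + ‖a‖ := by
        refine (norm_add_le _ _).trans (add_le_add ((norm_add_le _ _).trans (le_of_eq ?_)) le_rfl)
        rw [norm_neg, norm_mul, Complex.norm_exp, Complex.norm_exp]
        simp [abs_of_nonneg hP]
      rw [hF'def]
      simp only
      rw [norm_mul]
      refine (mul_le_mul b1 (hFb φ hφ t) (norm_nonneg _) (by positivity)).trans ?_
      simp only [hBdef]
      rw [← hE1, ← hE2]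
      have := mul_nonneg hKpos.le (hEpos a.re t).le
      nlinarith)
    (φ := c.arg) hφ1
  have hlog : Complex.log c = (Real.log ‖c‖ : ℝ) + c.arg * I := by
    apply Complex.ext <;> simp [Complex.log_re, Complex.log_im]
  rw [← key, ← integral_add_right_eq_self (fun t : ℝ => F (t + c.arg * I)) (Real.log ‖c‖), ← MeasureTheory.integral_const_mul]
  refine integral_congr_ae (Eventually.of_forall fun t => ?_)
  simp only [hFdef]
  have e2 : ((t + Real.log ‖c‖ : ℝ) : ℂ) + c.arg * I = t + Complex.log c := by
    rw [hlog]; push_cast; ring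
  have e3 : cexp (t + Complex.log c) = cexp t * c := by rw [Complex.exp_add, Complex.exp_log hc0]
  have e4 : cexp (-(t + Complex.log c)) = cexp (-t) / c := by
    rw [neg_add, Complex.exp_add, Complex.exp_neg (Complex.log c), Complex.exp_log hc0]; rfl
  rw [e2, e3, e4, cpow_def_of_ne_zero hc0, ← Complex.exp_add]
  congr 1
  ring

lemma integral_exp_mul_exp {c a : ℂ} (hc : 0 < c.re) (ha : 0 < a.re) :
    ∫ t : ℝ, cexp (-c * cexp t + a * t) = c ^ (-a) * Complex.Gamma a := by
  rw [← integral_exp_neg_exp ha]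
  simpa using integral_rotate (P := 0) hc le_rfl (Or.inr ha)

/-! ### The incomplete Gamma function and the series for the Macdonald function -/

lemma norm_cexp_lin (c a : ℂ) (t : ℝ) :
    ‖cexp (-c * cexp t + a * t)‖ = Real.exp (-c.re * Real.exp t + a.re * t) := by
  simpa using norm_cexp_two c a 0 t

lemma integrableOn_cexp_lin {ζ : ℂ} (hζ : 0 < ζ.re) (a : ℂ) :
    IntegrableOn (fun s : ℝ => cexp (-ζ * cexp s + a * s)) (Ioi 0) := by
  have h := (integrable_exp_lin hζ (α := |a.re| + 1) (by positivity)).integrableOn (s := Ioi 0)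
  refine Integrable.mono' h (by fun_prop) ?_
  refine (ae_restrict_iff' measurableSet_Ioi).2 (Eventually.of_forall fun s hs => ?_)
  rw [norm_cexp_lin, Real.exp_le_exp]
  have hs : 0 < s := hs
  have := mul_le_mul_of_nonneg_right (le_abs_self a.re) hs.le
  nlinarith

/-- Integration by parts for the upper incomplete Gamma function. -/
lemma upperGamma_recurrence {ζ : ℂ} (hζ : 0 < ζ.re) (a : ℂ) :
    a * (∫ s in Ioi (0 : ℝ), cexp (-ζ * cexp s + a * s))
      = ζ * (∫ s in Ioi (0 : ℝ), cexp (-ζ * cexp s + (a + 1) * s)) - cexp (-ζ) := by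
  have hd : ∀ s ∈ Ici (0 : ℝ), HasDerivAt (fun s : ℝ => cexp (-ζ * cexp s + a * s))
      (a * cexp (-ζ * cexp s + a * s) - ζ * cexp (-ζ * cexp s + (a + 1) * s)) s := by
    intro s _
    have h1 : HasDerivAt (fun s : ℝ => (s : ℂ)) 1 s := (hasDerivAt_id s).ofReal_comp
    have := ((h1.cexp.const_mul (-ζ)).add (h1.const_mul a)).cexp
    convert! this using 1
    rw [show (a + 1) * (s : ℂ) = a * s + s by ring, ← add_assoc, Complex.exp_add _ (s : ℂ)]
    simp only [Pi.add_apply]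
    ring
  have i0 := integrableOn_cexp_lin hζ a
  have i1 := integrableOn_cexp_lin hζ (a + 1)
  have hi : IntegrableOn (fun s : ℝ =>
      a * cexp (-ζ * cexp s + a * s) - ζ * cexp (-ζ * cexp s + (a + 1) * s)) (Ioi 0) :=
    (i0.const_mul a).sub (i1.const_mul ζ)
  have ht := tendsto_zero_of_hasDerivAt_of_integrableOn_Ioi
    (fun s hs => hd s (Ioi_subset_Ici_self hs)) hi i0
  have := integral_Ioi_of_hasDerivAt_of_tendsto' hd hi ht
  rw [integral_sub (i0.const_mul a) (i1.const_mul ζ), MeasureTheory.integral_const_mul,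
    MeasureTheory.integral_const_mul] at this
  simp only [ofReal_zero, Complex.exp_zero, mul_one, mul_zero, add_zero, zero_sub] at this
  linear_combination this

lemma hasSum_exp_series (z : ℂ) : HasSum (fun k : ℕ => z ^ k / (k.factorial : ℂ)) (cexp z) := by
  rw [Complex.exp_eq_exp_ℂ]
  exact NormedSpace.expSeries_div_hasSum_exp z

/-- For `Re a > 0` the lower incomplete Gamma integral is expanded term by term. -/
lemma hasSum_upperGamma_base {ζ a : ℂ} (hζ : 0 < ζ.re) (ha : 0 < a.re) :
    HasSum (fun k : ℕ => (-ζ) ^ k / (k.factorial * (a + k)))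
      (ζ ^ (-a) * Complex.Gamma a - ∫ s in Ioi (0 : ℝ), cexp (-ζ * cexp s + a * s)) := by
  have hint : Integrable fun s : ℝ => cexp (-ζ * cexp s + a * s) := by
    simpa using integrable_cexp_two (d := 0) hζ le_rfl (Or.inr ha)
  have hsplit := integral_add_compl (measurableSet_Iic (a := (0 : ℝ))) hint
  rw [compl_Iic, integral_exp_mul_exp hζ ha] at hsplit
  rw [← hsplit, add_sub_cancel_right]
  set F : ℕ → ℝ → ℂ := fun k s => (-ζ) ^ k / k.factorial * cexp ((a + k) * s) with hF
  have hre : ∀ k : ℕ, 0 < (a + k).re := fun k => by simp; positivity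
  have hFi : ∀ k, Integrable (F k) (volume.restrict (Iic (0 : ℝ))) := fun k =>
    (integrableOn_exp_mul_complex_Iic (hre k) 0).const_mul _
  have hnorm : ∀ k, ∫ s in Iic (0 : ℝ), ‖F k s‖ = ‖ζ‖ ^ k / k.factorial * (1 / (a.re + k)) := by
    intro k
    have h1 : ∀ s : ℝ, ‖F k s‖ = ‖ζ‖ ^ k / k.factorial * Real.exp ((a.re + k) * s) := by
      intro s
      rw [hF]
      simp [Complex.norm_exp]
    simp_rw [h1]
    rw [MeasureTheory.integral_const_mul, integral_exp_mul_Iic (by simpa using hre k)]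
    simp
  have hs : Summable fun k => ∫ s in Iic (0 : ℝ), ‖F k s‖ := by
    simp_rw [hnorm]
    refine Summable.of_nonneg_of_le (fun k => by positivity) (fun k => ?_)
      ((Real.summable_pow_div_factorial ‖ζ‖).mul_right (1 / a.re))
    gcongr
    simp
  have := hasSum_integral_of_summable_integral_norm hFi hs
  have e1 : ∀ s : ℝ, ∑' k, F k s = cexp (-ζ * cexp s + a * s) := by
    intro s
    have h2 := (hasSum_exp_series (-ζ * cexp s)).mul_right (cexp (a * s))
    rw [Complex.exp_add, ← h2.tsum_eq]
    refine tsum_congr fun k => ?_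
    rw [hF]
    simp only
    rw [mul_pow, ← Complex.exp_nat_mul, add_mul, Complex.exp_add]
    ring
  simp_rw [e1] at this
  refine this.congr_fun fun k => ?_
  rw [hF]
  simp only
  rw [MeasureTheory.integral_const_mul, integral_exp_mul_complex_Iic (hre k)]
  simp only [ofReal_zero, mul_zero, Complex.exp_zero, div_eq_mul_inv, mul_inv, one_mul]
  ring

/-- Power series of the lower incomplete Gamma function, continued to every exponent `a` that is
not a pole by downward induction along the recurrence. -/
lemma hasSum_upperGamma {ζ : ℂ} (hζ : 0 < ζ.re) (n : ℕ) :
    ∀ a : ℂ, -(n : ℝ) < a.re → (∀ k : ℕ, a ≠ -k) →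
    HasSum (fun k : ℕ => (-ζ) ^ k / (k.factorial * (a + k)))
      (ζ ^ (-a) * Complex.Gamma a - ∫ s in Ioi (0 : ℝ), cexp (-ζ * cexp s + a * s)) := by
  induction n with
  | zero => intro a ha _; exact hasSum_upperGamma_base hζ (by simpa using ha)
  | succ n ih =>
    intro a ha hk
    have hζ0 : ζ ≠ 0 := by rintro rfl; simp at hζ
    have ha0 : a ≠ 0 := by simpa using hk 0
    have h1 := ih (a + 1) (by simp at ha ⊢; linarith) (fun k hk' => hk (k + 1) (by
      push_cast; linear_combination hk'))
    have hne : ∀ k : ℕ, a + k ≠ 0 := fun k h => hk k (by linear_combination h)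
    -- The series for `a + 1`, times `-ζ` and shifted by one index; then
    -- `1 / (a + j) = a⁻¹ (1 - j / (a + j))` expresses the series for `a` through it.
    have h2 : HasSum (fun j : ℕ => (-ζ) ^ j / j.factorial * (j / (a + j))) _ :=
      HasSum.zero_add (f := fun j : ℕ => (-ζ) ^ j / j.factorial * (j / (a + j)))
        ((h1.mul_left (-ζ)).congr_fun fun k => by
          have := hne (k + 1)
          have hk1 : ((k : ℂ) + 1) ≠ 0 := by exact_mod_cast k.succ_ne_zero
          push_cast [Nat.factorial_succ] at this ⊢
          have h3 : a + 1 + (k : ℂ) ≠ 0 := by convert this using 1; ring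
          have h4 : (k.factorial : ℂ) ≠ 0 := by exact_mod_cast k.factorial_ne_zero
          field_simp
          ring)
    have h3 := ((hasSum_exp_series (-ζ)).sub h2).mul_left a⁻¹
    have hrec := upperGamma_recurrence hζ a
    convert! h3 using 1
    · funext k
      have := hne k
      have h4 : (k.factorial : ℂ) ≠ 0 := by exact_mod_cast k.factorial_ne_zero
      field_simp
      ring
    · rw [Complex.Gamma_add_one a ha0, neg_add, Complex.cpow_add _ _ hζ0, Complex.cpow_neg_one]
      simp only [CharP.cast_eq_zero, zero_div, mul_zero, zero_add]
      generalize (∫ s in Ioi (0 : ℝ), cexp (-ζ * cexp s + (a + 1) * s)) = A at hrec ⊢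
      generalize (∫ s in Ioi (0 : ℝ), cexp (-ζ * cexp s + a * s)) = B at hrec ⊢
      field_simp
      linear_combination (-1 : ℂ) * hrec

/-- The entire part of the Bessel functions: `J_μ(x) = (x/2)^μ φ_μ(-x²/4)` and
`I_μ(x) = (x/2)^μ φ_μ(x²/4)`. -/
noncomputable def besselEntire (μ w : ℂ) : ℂ :=
  ∑' n : ℕ, w ^ n / ((n.factorial : ℂ) * Complex.Gamma (n + μ + 1))

/-- The half-line piece of the Macdonald integral, expanded in powers of `exp (-s)`. -/
lemma hasSum_half_macdonald {ζ : ℂ} (hζ : 0 < ζ.re) (ν : ℂ) :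
    HasSum (fun n : ℕ => (-ζ) ^ n / n.factorial *
        ∫ s in Ioi (0 : ℝ), cexp (-ζ * cexp s + (-ν - n) * s))
      (∫ s in Ioi (0 : ℝ), cexp (-ζ * cexp s - ζ * cexp (-s) + (-ν) * s)) := by
  set F : ℕ → ℝ → ℂ := fun n s => (-ζ) ^ n / n.factorial * cexp (-ζ * cexp s + (-ν - n) * s) with hF
  have hFi : ∀ n, Integrable (F n) (volume.restrict (Ioi (0 : ℝ))) := fun n =>
    (integrableOn_cexp_lin hζ _).const_mul _
  have h0 := (integrableOn_cexp_lin hζ (-ν)).norm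
  have hs : Summable fun n => ∫ s in Ioi (0 : ℝ), ‖F n s‖ := by
    refine Summable.of_nonneg_of_le (fun n => integral_nonneg fun s => norm_nonneg _) (fun n => ?_)
      ((Real.summable_pow_div_factorial ‖ζ‖).mul_right
        (∫ s in Ioi (0 : ℝ), ‖cexp (-ζ * cexp s + (-ν) * s)‖))
    rw [← MeasureTheory.integral_const_mul]
    refine setIntegral_mono_on (hFi n).norm (h0.const_mul _) measurableSet_Ioi fun s hs => ?_
    rw [hF]
    simp only
    rw [norm_mul, norm_div, norm_pow, norm_neg, Complex.norm_natCast]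
    refine mul_le_mul_of_nonneg_left ?_ (by positivity)
    rw [norm_cexp_lin, norm_cexp_lin, Real.exp_le_exp]
    have hs : 0 < s := hs
    have : 0 ≤ (n : ℝ) * s := by positivity
    simp
    nlinarith
  have := hasSum_integral_of_summable_integral_norm hFi hs
  have e1 : ∀ s : ℝ, ∑' n, F n s = cexp (-ζ * cexp s - ζ * cexp (-s) + (-ν) * s) := by
    intro s
    have h2 := (hasSum_exp_series (-ζ * cexp (-s))).mul_right (cexp (-ζ * cexp s + (-ν) * s))
    rw [show -ζ * cexp s - ζ * cexp (-s) + (-ν) * s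
      = -ζ * cexp (-s) + (-ζ * cexp s + (-ν) * s) by ring, Complex.exp_add, ← h2.tsum_eq]
    refine tsum_congr fun n => ?_
    rw [hF]
    simp only
    rw [mul_pow, ← Complex.exp_nat_mul, show -ζ * cexp s + (-ν - n) * s
      = n * -s + (-ζ * cexp s + -ν * s) by ring, Complex.exp_add]
    ring
  simp_rw [e1] at this
  refine this.congr_fun fun n => ?_
  rw [hF]
  simp only
  rw [MeasureTheory.integral_const_mul]

/-- The double series produced by the incomplete Gamma expansions; it is odd in `ν` after exchanging
the two indices, so it drops out of the Macdonald function. -/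
noncomputable def oddTerm (ζ ν : ℂ) (p : ℕ × ℕ) : ℂ :=
  ((-ζ) ^ p.1 / p.1.factorial) * ((-ζ) ^ p.2 / (p.2.factorial * (-ν - p.1 + p.2)))

lemma summable_oddTerm (ζ : ℂ) {ν : ℂ} {δ : ℝ} (hδ : 0 < δ) (h : ∀ m : ℤ, δ ≤ ‖(m : ℂ) + ν‖) :
    Summable (oddTerm ζ ν) := by
  have h1 := Real.summable_pow_div_factorial ‖ζ‖
  have h2 := (h1.mul_of_nonneg h1 (fun n => by positivity) (fun n => by positivity)).mul_right δ⁻¹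
  refine Summable.of_norm_bounded h2 fun p => ?_
  rw [oddTerm]
  have h3 : δ ≤ ‖-ν - (p.1 : ℂ) + p.2‖ := by
    have := h (p.1 - p.2)
    rw [← norm_neg] at this
    refine this.trans (le_of_eq ?_)
    congr 1
    push_cast
    ring
  simp only [norm_mul, norm_div, norm_pow, norm_neg, Complex.norm_natCast]
  rw [mul_assoc]
  gcongr
  rw [div_mul_eq_div_div, div_eq_mul_inv (_ / _) ‖_‖]
  gcongr

/-- Changing the sign of `ν` and exchanging the indices negates each term. -/
lemma tsum_oddTerm_neg (ζ ν : ℂ) : ∑' p, oddTerm ζ (-ν) p = - ∑' p, oddTerm ζ ν p := by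
  rw [← (Equiv.prodComm ℕ ℕ).tsum_eq, ← tsum_neg]
  refine tsum_congr fun p => ?_
  simp only [oddTerm, Equiv.prodComm_apply, Prod.fst_swap, Prod.snd_swap]
  rw [show - -ν - (p.2 : ℂ) + p.1 = -(-ν - p.1 + p.2) by ring, mul_neg, div_neg]
  simp only [div_eq_mul_inv, mul_inv]
  ring

/-- The half-line piece plus the odd double series: expanding each upper incomplete Gamma function
leaves only the complete Gamma values. The lower bound `δ` keeps `ν` away from the integers. -/
lemma hasSum_half_macdonald_gamma {ζ ν : ℂ} (hζ : 0 < ζ.re) {δ : ℝ} (hδ : 0 < δ)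
    (h : ∀ m : ℤ, δ ≤ ‖(m : ℂ) + ν‖) :
    HasSum (fun n : ℕ => (-ζ) ^ n / n.factorial * (ζ ^ (ν + n) * Complex.Gamma (-ν - n)))
      ((∫ s in Ioi (0 : ℝ), cexp (-ζ * cexp s - ζ * cexp (-s) + (-ν) * s))
        + ∑' p, oddTerm ζ ν p) := by
  have hE : ∀ n : ℕ, HasSum (fun k : ℕ => (-ζ) ^ k / (k.factorial * (-ν - n + k)))
      (ζ ^ (ν + n) * Complex.Gamma (-ν - n)
        - ∫ s in Ioi (0 : ℝ), cexp (-ζ * cexp s + (-ν - n) * s)) := by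
    intro n
    obtain ⟨N, hN⟩ := exists_nat_gt (-(-ν - n : ℂ).re)
    have := hasSum_upperGamma hζ N (-ν - n) (by linarith) (fun k hk => by
      have h1 := h (n - k)
      rw [show ((n - k : ℤ) : ℂ) + ν = 0 by push_cast; linear_combination -hk] at h1
      simp at h1
      linarith)
    rwa [show -(-ν - (n : ℂ)) = ν + n by ring] at this
  have hB := (summable_oddTerm ζ hδ h).hasSum.prod_fiberwise
    (fun n => by simpa only [oddTerm] using (hE n).mul_left ((-ζ) ^ n / n.factorial))
  refine ((hasSum_half_macdonald hζ ν).add hB).congr_fun fun n => ?_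
  ring

/-- By reflection, the complete Gamma values give the terms of the series of `I_ν(2ζ)`. -/
lemma macdonald_term {ζ ν : ℂ} (hζ : ζ ≠ 0) (hν : -1 < ν.re) (hs : Complex.sin (Real.pi * ν) ≠ 0)
    (n : ℕ) :
    (-ζ) ^ n / n.factorial * (ζ ^ (ν + n) * Complex.Gamma (-ν - n))
      = -(Real.pi / Complex.sin (Real.pi * ν)) * ζ ^ ν *
        ((ζ ^ 2) ^ n / ((n.factorial : ℂ) * Complex.Gamma (n + ν + 1))) := by
  have h1 := Complex.Gamma_mul_Gamma_one_sub (n + ν + 1)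
  have h2 : Complex.Gamma (n + ν + 1) ≠ 0 := Complex.Gamma_ne_zero_of_re_pos (by
    simp; have : (0 : ℝ) ≤ n := by positivity
    linarith)
  have h3 : Complex.sin (Real.pi * (n + ν + 1)) = -(-1) ^ n * Complex.sin (Real.pi * ν) := by
    rw [show (Real.pi : ℂ) * (n + ν + 1) = (Real.pi * ν + n * Real.pi) + Real.pi by ring,
      Complex.sin_add_pi, Complex.sin_antiperiodic.add_nat_mul_eq]
    simp
  rw [h3, show 1 - ((n : ℂ) + ν + 1) = -ν - n by ring] at h1
  have h4 : Complex.Gamma (-ν - n)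
      = Real.pi / (-(-1) ^ n * Complex.sin (Real.pi * ν)) / Complex.Gamma (n + ν + 1) := by
    rw [← h1]; field_simp
  have h5 : ((-1 : ℂ) ^ n) ≠ 0 := by simp
  have h6 : (n.factorial : ℂ) ≠ 0 := by exact_mod_cast n.factorial_ne_zero
  rw [h4, Complex.cpow_add _ _ hζ, Complex.cpow_natCast, neg_pow ζ n]
  field_simp
  ring

lemma dist_int_add {ν : ℂ} (h2 : ν.re < 1 / 2) (m : ℤ) : ν.re ≤ ‖(m : ℂ) + ν‖ := by
  refine le_trans ?_ (Complex.abs_re_le_norm _)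
  simp only [add_re, intCast_re]
  rcases le_or_gt 0 m with h | h
  · have : (0 : ℝ) ≤ m := by exact_mod_cast h
    exact le_trans (by linarith) (le_abs_self _)
  · have : (m : ℝ) ≤ -1 := by exact_mod_cast (show m ≤ -1 by lia)
    exact le_trans (by linarith) (neg_le_abs _)

lemma sin_pi_ne_zero_of_strip {ν : ℂ} (h1 : 0 < ν.re) (h2 : ν.re < 1 / 2) :
    Complex.sin (Real.pi * ν) ≠ 0 := by
  rw [Complex.sin_ne_zero_iff]
  intro k hk
  have h3 : ν = k := by
    have : (Real.pi : ℂ) ≠ 0 := by exact_mod_cast Real.pi_ne_zero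
    exact mul_left_cancel₀ this (by rw [hk]; ring)
  have := dist_int_add h2 (-k)
  rw [h3] at this h1
  simp at this h1
  linarith

/-- Macdonald's formula: twice `K_ν(2ζ)` is `π / sin(πν)` times `I_{-ν}(2ζ) - I_ν(2ζ)`. -/
lemma macdonald {ζ ν : ℂ} (hζ : 0 < ζ.re) (h1 : 0 < ν.re) (h2 : ν.re < 1 / 2) :
    ∫ s : ℝ, cexp (-ζ * cexp s - ζ * cexp (-s) + (-ν) * s)
      = Real.pi / Complex.sin (Real.pi * ν) *
        (ζ ^ (-ν) * besselEntire (-ν) (ζ ^ 2) - ζ ^ ν * besselEntire ν (ζ ^ 2)) := by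
  have hζ0 : ζ ≠ 0 := by rintro rfl; simp at hζ
  have hsin := sin_pi_ne_zero_of_strip h1 h2
  have hsin' : Complex.sin (Real.pi * -ν) ≠ 0 := by
    rw [mul_neg, Complex.sin_neg]; exact neg_ne_zero.2 hsin
  have d1 := dist_int_add h2
  have d2 : ∀ m : ℤ, ν.re ≤ ‖(m : ℂ) + -ν‖ := fun m => by
    have := d1 (-m)
    rw [← norm_neg] at this
    refine this.trans (le_of_eq ?_)
    congr 1; push_cast; ring
  have s1 := (hasSum_half_macdonald_gamma hζ h1 d1).tsum_eq
  have s2 := (hasSum_half_macdonald_gamma hζ h1 d2).tsum_eq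
  simp_rw [macdonald_term hζ0 (show -1 < ν.re by linarith) hsin] at s1
  simp_rw [macdonald_term hζ0 (show -1 < (-ν).re by simp; linarith) hsin'] at s2
  rw [tsum_mul_left] at s1 s2
  have hint : Integrable fun s : ℝ => cexp (-ζ * cexp s - ζ * cexp (-s) + (-ν) * s) :=
    integrable_cexp_two hζ hζ.le (Or.inl hζ)
  have hsplit := integral_add_compl (measurableSet_Iic (a := (0 : ℝ))) hint
  rw [compl_Iic] at hsplit
  have hneg : ∫ s in Iic (0 : ℝ), cexp (-ζ * cexp s - ζ * cexp (-s) + (-ν) * s)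
      = ∫ s in Ioi (0 : ℝ), cexp (-ζ * cexp s - ζ * cexp (-s) + (- -ν) * s) := by
    rw [show Ioi (0 : ℝ) = Ioi (-0) by simp, ← integral_comp_neg_Iic]
    refine integral_congr_ae (Eventually.of_forall fun s => ?_)
    simp only
    congr 1
    push_cast
    rw [neg_neg]
    ring
  rw [← hsplit, hneg]
  -- The pieces over `s < 0` and `s > 0` carry opposite signs of `ν`, so their odd double series
  -- cancel in the sum of `s1` and `s2`.
  rw [tsum_oddTerm_neg] at s2
  rw [mul_neg, Complex.sin_neg] at s2
  unfold besselEntire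
  linear_combination -s1 - s2

/-! ### The Bessel functions near the order `ν` -/

/-- A bound uniform in the order, which dominates the Bessel series locally in the order. -/
lemma norm_Gamma_ratio {μ : ℂ} (hμ : -(1 / 2) < μ.re) (n : ℕ) :
    ‖Complex.Gamma (μ + 1) / Complex.Gamma (n + μ + 1)‖ ≤ 2 ^ n := by
  have hpos : ∀ n : ℕ, 0 < ((n : ℂ) + μ + 1).re := fun n => by
    simp; have : (0 : ℝ) ≤ n := by positivity
    linarith
  induction n with
  | zero =>
    have := Complex.Gamma_ne_zero_of_re_pos (hpos 0)
    simp only [CharP.cast_eq_zero, zero_add, pow_zero] at this ⊢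
    rw [div_self this, norm_one]
  | succ n ih =>
    have h0 : (n : ℂ) + μ + 1 ≠ 0 := fun h => by have := hpos n; rw [h] at this; simp at this
    have h1 : 1 / 2 ≤ ‖(n : ℂ) + μ + 1‖ := by
      refine le_trans ?_ (Complex.re_le_norm _)
      simp; have : (0 : ℝ) ≤ n := by positivity
      linarith
    rw [show ((n + 1 : ℕ) : ℂ) + μ + 1 = (n + μ + 1) + 1 by push_cast; ring,
      Complex.Gamma_add_one _ h0, mul_comm, div_mul_eq_div_div, norm_div, pow_succ,
      div_le_iff₀ (by linarith)]
    refine ih.trans ?_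
    have : (0 : ℝ) < 2 ^ n := by positivity
    nlinarith

lemma continuousAt_besselEntire {μ w : ℂ} (hμ : -(1 / 2) < μ.re) :
    ContinuousAt (fun p : ℂ × ℂ => besselEntire p.1 p.2) (μ, w) := by
  set s : Set (ℂ × ℂ) := {p | -(1 / 2) < p.1.re ∧ ‖p.2‖ < ‖w‖ + 1} with hs
  have hopen : IsOpen s :=
    (isOpen_lt continuous_const (Complex.continuous_re.comp continuous_fst)).inter
      (isOpen_lt (continuous_norm.comp continuous_snd) continuous_const)
  have hmem : (μ, w) ∈ s := ⟨hμ, by simp⟩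
  have hG : ∀ n : ℕ, ContinuousOn (fun p : ℂ × ℂ => Complex.Gamma (n + p.1 + 1)) s := by
    intro n p hp
    have hre : 0 < ((n : ℂ) + p.1 + 1).re := by
      simp; have : (0 : ℝ) ≤ n := by positivity
      linarith [hp.1]
    have h1 : ContinuousAt Complex.Gamma ((n : ℂ) + p.1 + 1) :=
      (Complex.differentiableAt_Gamma _ fun m h => by
        rw [h] at hre; simp at hre; linarith [(by positivity : (0 : ℝ) ≤ m)]).continuousAt
    exact (ContinuousAt.comp (f := fun p : ℂ × ℂ => (n : ℂ) + p.1 + 1) h1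
      (by fun_prop)).continuousWithinAt
  have hG0 : ∀ n : ℕ, ∀ p ∈ s, Complex.Gamma (n + p.1 + 1) ≠ 0 := by
    intro n p hp
    refine Complex.Gamma_ne_zero_of_re_pos ?_
    simp; have : (0 : ℝ) ≤ n := by positivity
    linarith [hp.1]
  have hG' : ContinuousOn (fun p : ℂ × ℂ => Complex.Gamma (p.1 + 1)) s := by simpa using hG 0
  have hG0' : ∀ p ∈ s, Complex.Gamma (p.1 + 1) ≠ 0 := fun p hp => by simpa using hG0 0 p hp
  have key : ContinuousOn (fun p : ℂ × ℂ => ∑' n : ℕ, p.2 ^ n / n.factorial *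
      (Complex.Gamma (p.1 + 1) / Complex.Gamma (n + p.1 + 1))) s := by
    refine continuousOn_tsum (u := fun n => (2 * (‖w‖ + 1)) ^ n / n.factorial) (fun n => ?_)
      (Real.summable_pow_div_factorial (2 * (‖w‖ + 1))) (fun n p hp => ?_)
    · have c1 : ContinuousOn (fun p : ℂ × ℂ => p.2 ^ n / (n.factorial : ℂ)) s := by
        generalize (n.factorial : ℂ) = k
        exact ((continuous_snd.pow n).div_const k).continuousOn
      have c2 : ContinuousOn
          (fun p : ℂ × ℂ => Complex.Gamma (p.1 + 1) / Complex.Gamma (n + p.1 + 1)) s :=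
        ContinuousOn.div hG' (hG n) (hG0 n)
      exact c1.mul c2
    · rw [norm_mul, norm_div, norm_pow, Complex.norm_natCast]
      have h2 := norm_Gamma_ratio hp.1 n
      have h3 := hp.2.le
      calc _ ≤ (‖w‖ + 1) ^ n / n.factorial * 2 ^ n := by gcongr
        _ = _ := by rw [mul_pow]; ring
  refine ((key.div hG' hG0').congr fun p hp => ?_).continuousAt (hopen.mem_nhds hmem)
  have h0 := hG0' p hp
  unfold besselEntire
  rw [Pi.div_apply, ← tsum_div_const]
  refine tsum_congr fun n => ?_
  have := hG0 n p hp
  have h6 : (n.factorial : ℂ) ≠ 0 := by exact_mod_cast n.factorial_ne_zero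
  field_simp

lemma besselJ_eq (μ : ℂ) {x : ℝ} (hx : 0 < x) :
    besselJ μ x = ((x / 2 : ℝ) : ℂ) ^ μ * besselEntire μ (-((x / 2 : ℝ) : ℂ) ^ 2) := by
  have h0 : ((x / 2 : ℝ) : ℂ) ≠ 0 := by exact_mod_cast (by positivity : x / 2 ≠ 0)
  unfold besselJ besselEntire
  rw [← tsum_mul_left]
  refine tsum_congr fun n => ?_
  rw [show (x : ℂ) / 2 = ((x / 2 : ℝ) : ℂ) by push_cast; rfl, Complex.cpow_add _ _ h0,
    show 2 * (n : ℂ) = ((2 * n : ℕ) : ℂ) by push_cast; rfl, Complex.cpow_natCast,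
    Complex.Gamma_nat_eq_factorial, pow_mul, neg_pow (_ ^ 2) n]
  ring

lemma continuousAt_besselJ_order {μ : ℂ} (hμ : -(1 / 2) < μ.re) {x : ℝ} (hx : 0 < x) :
    ContinuousAt (fun μ => besselJ μ x) μ := by
  simp_rw [besselJ_eq _ hx]
  have h0 : ((x / 2 : ℝ) : ℂ) ≠ 0 := by exact_mod_cast (by positivity : x / 2 ≠ 0)
  refine (continuousAt_const_cpow h0).mul ?_
  exact ContinuousAt.comp (f := fun μ : ℂ => (μ, -((x / 2 : ℝ) : ℂ) ^ 2))
    (continuousAt_besselEntire hμ) (by fun_prop)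

/-- For non-integer order, the limit defining `Y_ν` is attained by continuity in the order. -/
lemma besselY_eq {ν : ℂ} (h1 : 0 < ν.re) (h2 : ν.re < 1 / 2) {x : ℝ} (hx : 0 < x) :
    besselY ν x = (besselJ ν x * Complex.cos (Real.pi * ν) - besselJ (-ν) x)
      / Complex.sin (Real.pi * ν) := by
  have c1 := continuousAt_besselJ_order (μ := ν) (by linarith) hx
  have c2 := continuousAt_besselJ_order (μ := -ν) (by simp; linarith) hx
  have c3 : ContinuousAt (fun μ => besselJ (-μ) x) ν :=
    ContinuousAt.comp (f := fun μ : ℂ => -μ) c2 (by fun_prop)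
  have c : ContinuousAt (fun μ => (besselJ μ x * Complex.cos (Real.pi * μ) - besselJ (-μ) x)
      / Complex.sin (Real.pi * μ)) ν :=
    ((c1.mul (by fun_prop)).sub c3).div (by fun_prop) (sin_pi_ne_zero_of_strip h1 h2)
  exact (c.tendsto.mono_left nhdsWithin_le_nhds).limUnder_eq

/-- Elimination of `Y_ν` in favour of `J_{-ν}`, cleared of the denominator `sin² πν`. -/
lemma besselJ_sq_add_besselY_sq {ν : ℂ} (h1 : 0 < ν.re) (h2 : ν.re < 1 / 2) {x : ℝ}
    (hx : 0 < x) :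
    Complex.sin (Real.pi * ν) ^ 2 * (besselJ ν x ^ 2 + besselY ν x ^ 2)
      = besselJ ν x ^ 2 + besselJ (-ν) x ^ 2
        - 2 * Complex.cos (Real.pi * ν) * besselJ ν x * besselJ (-ν) x := by
  rw [besselY_eq h1 h2 hx]
  have := sin_pi_ne_zero_of_strip h1 h2
  have h := Complex.sin_sq_add_cos_sq (Real.pi * ν)
  field_simp
  linear_combination (besselJ ν x ^ 2) * h

/-- The right-hand side of Macdonald's formula. -/
noncomputable def macdonaldRHS (ν ζ : ℂ) : ℂ :=
  Real.pi / Complex.sin (Real.pi * ν) *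
    (ζ ^ (-ν) * besselEntire (-ν) (ζ ^ 2) - ζ ^ ν * besselEntire ν (ζ ^ 2))

lemma continuousAt_macdonaldRHS {ν ζ : ℂ} (h1 : 0 < ν.re) (h2 : ν.re < 1 / 2)
    (hζ : ζ ∈ slitPlane) : ContinuousAt (macdonaldRHS ν) ζ := by
  have hE : ∀ μ : ℂ, -(1 / 2) < μ.re → ContinuousAt (fun ζ => besselEntire μ (ζ ^ 2)) ζ :=
    fun μ hμ => ContinuousAt.comp (f := fun ζ : ℂ => (μ, ζ ^ 2))
      (continuousAt_besselEntire hμ) (by fun_prop)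
  unfold macdonaldRHS
  exact continuousAt_const.mul
    (((continuousAt_id.cpow continuousAt_const hζ).mul (hE _ (by simp; linarith))).sub
      ((continuousAt_id.cpow continuousAt_const hζ).mul (hE _ (by linarith))))

/-- On the imaginary axis the product of the two conjugate Macdonald functions is the Bessel
combination `J_ν² + Y_ν²`. -/
lemma macdonaldRHS_mul {ν : ℂ} (h1 : 0 < ν.re) (h2 : ν.re < 1 / 2) {x : ℝ} (hx : 0 < x) :
    macdonaldRHS ν (((x / 2 : ℝ) : ℂ) * I) * macdonaldRHS ν (((x / 2 : ℝ) : ℂ) * -I)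
      = Real.pi ^ 2 * (besselJ ν x ^ 2 + besselY ν x ^ 2) := by
  have hs := sin_pi_ne_zero_of_strip h1 h2
  have h := besselJ_sq_add_besselY_sq h1 h2 hx
  have hx2 : 0 < x / 2 := by positivity
  have h0 : ((x / 2 : ℝ) : ℂ) ≠ 0 := by exact_mod_cast hx2.ne'
  have e1 : ∀ μ : ℂ, (((x / 2 : ℝ) : ℂ) * I) ^ μ = ((x / 2 : ℝ) : ℂ) ^ μ
      * cexp (Real.pi / 2 * I * μ) := by
    intro μ
    rw [Complex.cpow_def_of_ne_zero (mul_ne_zero h0 I_ne_zero), Complex.cpow_def_of_ne_zero h0,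
      Complex.log_ofReal_mul hx2 I_ne_zero, Complex.log_I, add_mul, Complex.exp_add,
      Complex.ofReal_log hx2.le]
  have e2 : ∀ μ : ℂ, (((x / 2 : ℝ) : ℂ) * -I) ^ μ = ((x / 2 : ℝ) : ℂ) ^ μ
      * cexp (-(Real.pi / 2) * I * μ) := by
    intro μ
    have hI := neg_ne_zero.2 I_ne_zero
    rw [Complex.cpow_def_of_ne_zero (mul_ne_zero h0 hI), Complex.cpow_def_of_ne_zero h0,
      Complex.log_ofReal_mul hx2 hI, Complex.log_neg_I, add_mul, Complex.exp_add,
      Complex.ofReal_log hx2.le]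
  have e3 : (((x / 2 : ℝ) : ℂ) * I) ^ 2 = -((x / 2 : ℝ) : ℂ) ^ 2 := by
    rw [mul_pow, I_sq]; ring
  have e4 : (((x / 2 : ℝ) : ℂ) * -I) ^ 2 = -((x / 2 : ℝ) : ℂ) ^ 2 := by
    rw [mul_pow, neg_sq, I_sq]; ring
  unfold macdonaldRHS
  rw [e1, e1, e2, e2, e3, e4]
  have p1 : cexp (Real.pi / 2 * I * ν) * cexp (-(Real.pi / 2) * I * ν) = 1 := by
    rw [← Complex.exp_add, show Real.pi / 2 * I * ν + -(Real.pi / 2) * I * ν = 0 by ring,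
      Complex.exp_zero]
  have p2 : cexp (Real.pi / 2 * I * -ν) = cexp (-(Real.pi / 2) * I * ν) := by congr 1; ring
  have p3 : cexp (-(Real.pi / 2) * I * -ν) = cexp (Real.pi / 2 * I * ν) := by congr 1; ring
  have p4 : 2 * Complex.cos (Real.pi * ν)
      = cexp (Real.pi / 2 * I * ν) ^ 2 + cexp (-(Real.pi / 2) * I * ν) ^ 2 := by
    rw [Complex.two_cos, ← Complex.exp_nat_mul, ← Complex.exp_nat_mul]
    congr 2 <;> push_cast <;> ring
  rw [p2, p3]
  rw [p4, besselJ_eq _ hx, besselJ_eq _ hx] at h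
  rw [besselJ_eq _ hx]
  generalize cexp (Real.pi / 2 * I * ν) = E at *
  generalize cexp (-(Real.pi / 2) * I * ν) = E' at *
  generalize besselY ν x = Y at *
  generalize besselEntire ν _ = a at *
  generalize besselEntire (-ν) _ = b at *
  generalize ((x / 2 : ℝ) : ℂ) ^ ν = u at *
  generalize ((x / 2 : ℝ) : ℂ) ^ (-ν) = v at *
  field_simp
  linear_combination (v ^ 2 * b ^ 2 + u ^ 2 * a ^ 2) * p1 - h

/-! ### Nicholson's formula -/

/-- `(cosh σ - 1) / 2`. -/
noncomputable def halfCosh (σ : ℝ) : ℝ := (Real.exp σ + Real.exp (-σ) - 2) / 4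

lemma halfCosh_nonneg (σ : ℝ) : 0 ≤ halfCosh σ := by
  have h : Real.exp σ * Real.exp (-σ) = 1 := by rw [← Real.exp_add]; simp
  have := Real.exp_pos σ
  have := Real.exp_pos (-σ)
  unfold halfCosh
  nlinarith [sq_nonneg (Real.exp σ - 1), sq_nonneg (Real.exp (-σ) - 1),
    sq_nonneg (Real.exp σ - Real.exp (-σ))]

lemma continuous_halfCosh : Continuous halfCosh := by
  unfold halfCosh
  fun_prop

/-- The regularised parameter `x² (cosh σ - 1) / 2 + ε² x² (cosh σ + 1) / 2`. -/
noncomputable def regParam (ε x σ : ℝ) : ℝ :=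
  x ^ 2 * halfCosh σ + ε ^ 2 * (x ^ 2 * (Real.exp σ + Real.exp (-σ) + 2) / 4)

/-- The integrand of Nicholson's double integral, with regularisation `ε`; the case `ε = 0` gives
`J_ν² + Y_ν²`. -/
noncomputable def nicholsonKernel (ν : ℂ) (ε x : ℝ) (p : ℝ × ℝ) : ℂ :=
  cexp (-ν * p.1) * (Real.exp (-Real.exp p.2 - regParam ε x p.1 * Real.exp (-p.2)) : ℝ)

lemma continuous_nicholsonKernel (ν : ℂ) (ε x : ℝ) : Continuous (nicholsonKernel ν ε x) := by
  unfold nicholsonKernel regParam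
  have := continuous_halfCosh
  fun_prop

lemma norm_nicholsonKernel (ν : ℂ) (ε x : ℝ) (p : ℝ × ℝ) :
    ‖nicholsonKernel ν ε x p‖
      = Real.exp (-ν.re * p.1) * Real.exp (-Real.exp p.2 - regParam ε x p.1 * Real.exp (-p.2)) := by
  unfold nicholsonKernel
  rw [norm_mul, Complex.norm_exp, Complex.norm_real, Real.norm_of_nonneg (Real.exp_pos _).le]
  simp

/-- The product of two Macdonald integrals at conjugate arguments is a convolution integral, whose
inner integral becomes real after rotating the contour. -/
lemma macdonaldRHS_mul_eq_integral {ν : ℂ} (h1 : 0 < ν.re) (h2 : ν.re < 1 / 2) {x ε : ℝ}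
    (hx : 0 < x) (hε : 0 < ε) :
    macdonaldRHS ν (((x / 2 : ℝ) : ℂ) * (ε + I)) * macdonaldRHS ν (((x / 2 : ℝ) : ℂ) * (ε - I))
      = ∫ σ : ℝ, ∫ y : ℝ, nicholsonKernel ν ε x (σ, y) := by
  set ζ : ℂ := ((x / 2 : ℝ) : ℂ) * (ε + I) with hζd
  set ζ' : ℂ := ((x / 2 : ℝ) : ℂ) * (ε - I) with hζd'
  have hζ : 0 < ζ.re := by rw [hζd, Complex.re_ofReal_mul]; simp; positivity
  have hζ' : 0 < ζ'.re := by rw [hζd', Complex.re_ofReal_mul]; simp; positivity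
  set f : ℝ → ℂ := fun s => cexp (-ζ * cexp s - ζ * cexp (-s) + (-ν) * s) with hf
  set h : ℝ → ℂ := fun s => cexp (-ζ' * cexp s - ζ' * cexp (-s) + (-ν) * s) with hh
  have hfi : Integrable f := integrable_cexp_two hζ hζ.le (Or.inl hζ)
  have hhi : Integrable h := integrable_cexp_two hζ' hζ'.le (Or.inl hζ')
  have hconv := integral_convolution (μ := volume) (ν := volume) (ContinuousLinearMap.mul ℂ ℂ)
    hfi hhi
  simp only [ContinuousLinearMap.mul_apply'] at hconv
  have ef : ∫ s, f s = macdonaldRHS ν ζ := macdonald hζ h1 h2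
  have eh : ∫ s, h s = macdonaldRHS ν ζ' := macdonald hζ' h1 h2
  rw [← ef, ← eh, ← hconv]
  refine integral_congr_ae (Eventually.of_forall fun σ => ?_)
  simp only [convolution_def, ContinuousLinearMap.mul_apply']
  set c : ℂ := ζ + ζ' * cexp (-σ) with hc
  have hcre : 0 < c.re := by
    rw [hc, ← Complex.ofReal_neg, ← Complex.ofReal_exp, add_re, Complex.re_mul_ofReal]
    positivity
  have hc0 : c ≠ 0 := fun h => by rw [h] at hcre; simp at hcre
  have hP : 0 < regParam ε x σ := by
    unfold regParam
    have := halfCosh_nonneg σ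
    positivity
  -- `c` and `ζ + ζ' e^σ` are the coefficients of `exp t` and `exp (-t)` in the convolution
  -- integrand; their product is the nonnegative real `regParam`, so the rotation applies.
  have hcd : (regParam ε x σ : ℂ) / c = ζ + ζ' * cexp σ := by
    rw [div_eq_iff hc0, hc, hζd, hζd']
    have he : cexp σ * cexp (-σ) = 1 := by rw [← Complex.exp_add]; simp
    unfold regParam halfCosh
    push_cast
    linear_combination (-(x : ℂ) ^ 2 / 4 * (ε - I) ^ 2) * he + (x : ℂ) ^ 2 / 4
      * (cexp σ + cexp (-σ) - 2) * I_sq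
  have hrot := integral_rotate (a := 0) hcre hP.le (Or.inl hP)
  rw [neg_zero, Complex.cpow_zero, one_mul, hcd] at hrot
  have e1 : ∀ t : ℝ, f t * h (σ - t) = cexp (-ν * σ)
      * cexp (-c * cexp t - (ζ + ζ' * cexp σ) * cexp (-t) + 0 * t) := by
    intro t
    rw [hf, hh]
    simp only
    rw [← Complex.exp_add, ← Complex.exp_add]
    congr 1
    push_cast
    rw [neg_sub, sub_eq_add_neg (σ : ℂ), sub_eq_add_neg (t : ℂ), Complex.exp_add, Complex.exp_add,
      hc]
    ring
  simp_rw [e1]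
  rw [MeasureTheory.integral_const_mul, hrot, ← MeasureTheory.integral_const_mul]
  refine integral_congr_ae (Eventually.of_forall fun y => ?_)
  unfold nicholsonKernel
  simp only
  push_cast
  congr 2
  ring

/-- **Nicholson's formula** for `J_ν² + Y_ν²`, as the limit `ε → 0` of the product of Macdonald
functions. -/
lemma nicholson {ν : ℂ} (h1 : 0 < ν.re) (h2 : ν.re < 1 / 2) {x : ℝ} (hx : 0 < x)
    (hint : Integrable (nicholsonKernel ν 0 x)) :
    ∫ p, nicholsonKernel ν 0 x p = Real.pi ^ 2 * (besselJ ν x ^ 2 + besselY ν x ^ 2) := by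
  -- The regularising term only decreases the modulus, so the kernel at `ε = 0` dominates.
  have hbound : ∀ ε p, ‖nicholsonKernel ν ε x p‖ ≤ ‖nicholsonKernel ν 0 x p‖ := by
    intro ε p
    rw [norm_nicholsonKernel, norm_nicholsonKernel]
    unfold regParam
    have : 0 ≤ ε ^ 2 * (x ^ 2 * (Real.exp p.1 + Real.exp (-p.1) + 2) / 4) := by positivity
    refine mul_le_mul_of_nonneg_left (Real.exp_le_exp.2 (sub_le_sub_left
      (mul_le_mul_of_nonneg_right ?_ (Real.exp_pos _).le) _)) (Real.exp_pos _).le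
    rw [zero_pow two_ne_zero, zero_mul]
    linarith
  have hlim : Tendsto (fun ε : ℝ => ∫ p, nicholsonKernel ν ε x p) (𝓝[>] 0)
      (𝓝 (∫ p, nicholsonKernel ν 0 x p)) := by
    refine tendsto_integral_filter_of_dominated_convergence _
      (Eventually.of_forall fun ε => (continuous_nicholsonKernel ν ε x).aestronglyMeasurable)
      (Eventually.of_forall fun ε => Eventually.of_forall (hbound ε)) hint.norm
      (Eventually.of_forall fun p => ?_)
    have : Continuous fun ε => nicholsonKernel ν ε x p := by
      unfold nicholsonKernel regParam
      fun_prop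
    exact (this.tendsto 0).mono_left nhdsWithin_le_nhds
  have hslit : ∀ s : ℂ, s.im ≠ 0 → s ∈ slitPlane := fun s hs => Or.inr hs
  have hx2 : x / 2 ≠ 0 := by positivity
  have c1 : ContinuousAt (fun ε : ℝ => macdonaldRHS ν (((x / 2 : ℝ) : ℂ) * (ε + I))) 0 := by
    refine ContinuousAt.comp (f := fun ε : ℝ => ((x / 2 : ℝ) : ℂ) * (ε + I))
      (continuousAt_macdonaldRHS h1 h2 (hslit _ ?_)) (by fun_prop)
    rw [Complex.im_ofReal_mul]
    simpa using hx2
  have c2 : ContinuousAt (fun ε : ℝ => macdonaldRHS ν (((x / 2 : ℝ) : ℂ) * (ε - I))) 0 := by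
    refine ContinuousAt.comp (f := fun ε : ℝ => ((x / 2 : ℝ) : ℂ) * (ε - I))
      (continuousAt_macdonaldRHS h1 h2 (hslit _ ?_)) (by fun_prop)
    rw [Complex.im_ofReal_mul]
    simpa using hx2
  have hlim' : Tendsto (fun ε : ℝ => macdonaldRHS ν (((x / 2 : ℝ) : ℂ) * (ε + I))
      * macdonaldRHS ν (((x / 2 : ℝ) : ℂ) * (ε - I))) (𝓝[>] 0)
      (𝓝 (macdonaldRHS ν (((x / 2 : ℝ) : ℂ) * ((0 : ℝ) + I))
        * macdonaldRHS ν (((x / 2 : ℝ) : ℂ) * ((0 : ℝ) - I)))) :=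
    (c1.mul c2).tendsto.mono_left nhdsWithin_le_nhds
  rw [ofReal_zero, zero_add, zero_sub, macdonaldRHS_mul h1 h2 hx] at hlim'
  refine tendsto_nhds_unique hlim (hlim'.congr' ?_)
  filter_upwards [self_mem_nhdsWithin] with ε hε
  rw [macdonaldRHS_mul_eq_integral h1 h2 hx hε]
  exact (integral_prod _ (Integrable.mono hint
    (continuous_nicholsonKernel ν ε x).aestronglyMeasurable
    (Eventually.of_forall (hbound ε)))).symm

/-! ### The Mellin transform of `J_ν² + Y_ν²` -/

lemma gaussian_mellin_aux (U : ℂ) (k t : ℝ) :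
    (Real.exp t : ℂ) * (((Real.exp t : ℝ) : ℂ) ^ (U - 1) * (Real.exp (-(Real.exp t ^ 2 * k)) : ℝ))
      = (fun s : ℝ => cexp (-k * cexp s + U / 2 * s)) (2 * t) := by
  have h0 : ((Real.exp t : ℝ) : ℂ) ≠ 0 := by exact_mod_cast (Real.exp_pos t).ne'
  rw [Complex.cpow_def_of_ne_zero h0, ← Complex.ofReal_log (Real.exp_pos t).le, Real.log_exp,
    ← Real.exp_nat_mul, Complex.ofReal_exp, Complex.ofReal_exp, ← Complex.exp_add,
    ← Complex.exp_add]
  congr 1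
  push_cast
  ring

lemma integrableOn_gaussian_mellin {U : ℂ} (hU : 0 < U.re) {k : ℝ} (hk : 0 < k) :
    IntegrableOn (fun x : ℝ => (x : ℂ) ^ (U - 1) * (Real.exp (-(x ^ 2 * k)) : ℝ)) (Ioi 0) := by
  rw [← integrable_comp_exp_univ]
  simp_rw [gaussian_mellin_aux]
  refine Integrable.comp_mul_left' (g := fun s : ℝ => cexp (-k * cexp s + U / 2 * s)) ?_ two_ne_zero
  simpa using integrable_cexp_two (c := (k : ℂ)) (a := U / 2) (d := 0) (by simpa using hk) le_rfl
    (Or.inr (by simpa using hU))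

lemma integral_gaussian_mellin {U : ℂ} (hU : 0 < U.re) {k : ℝ} (hk : 0 < k) :
    ∫ x in Ioi (0 : ℝ), (x : ℂ) ^ (U - 1) * (Real.exp (-(x ^ 2 * k)) : ℝ)
      = 1 / 2 * Complex.Gamma (U / 2) * (k : ℂ) ^ (-(U / 2)) := by
  rw [← integral_comp_exp_univ]
  simp_rw [gaussian_mellin_aux]
  rw [Measure.integral_comp_mul_left (fun s : ℝ => cexp (-k * cexp s + U / 2 * s)), integral_exp_mul_exp (by simpa using hk)
    (by simpa using hU)]
  rw [abs_of_pos (by norm_num), Complex.real_smul]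
  push_cast
  ring

lemma halfCosh_pos {σ : ℝ} (hσ : σ ≠ 0) : 0 < halfCosh σ := by
  have h : Real.exp σ * Real.exp (-σ) = 1 := by rw [← Real.exp_add]; simp
  have h1 := Real.exp_pos (-σ)
  have h2 : Real.exp σ - 1 ≠ 0 := fun h => hσ (by
    rw [← Real.exp_eq_one_iff]; linarith)
  have h3 : halfCosh σ = (Real.exp σ - 1) ^ 2 * Real.exp (-σ) / 4 := by
    unfold halfCosh
    linear_combination (1 / 4 * (2 - Real.exp σ)) * h
  rw [h3]
  positivity

/-- The factor of the `σ`-integral left after integrating out the other two variables. -/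
noncomputable def sigmaFactor (ν U : ℂ) (σ : ℝ) : ℂ :=
  cexp (-ν * σ) * (halfCosh σ : ℂ) ^ (-(U / 2))

lemma sigmaFactor_neg (ν U : ℂ) (σ : ℝ) : sigmaFactor ν U (-σ) = sigmaFactor (-ν) U σ := by
  unfold sigmaFactor halfCosh
  rw [neg_neg, add_comm (Real.exp (-σ))]
  push_cast
  congr 2
  ring

lemma image_exp_neg_Ioi : (fun σ : ℝ => Real.exp (-σ)) '' Ioi 0 = Ioo 0 1 := by
  ext v
  constructor
  · rintro ⟨σ, hσ, rfl⟩
    have hσ : 0 < σ := hσ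
    exact ⟨Real.exp_pos _, by simpa using hσ⟩
  · rintro ⟨h0, h1⟩
    exact ⟨-Real.log v, by simpa using Real.log_neg h0 h1, by simp [Real.exp_log h0]⟩

/-- Under `v = exp (-σ)` the half-line integrand becomes a Beta integrand. -/
lemma sigmaFactor_subst (ν U : ℂ) {σ : ℝ} (hσ : 0 < σ) :
    |-Real.exp (-σ)| • ((fun v : ℝ => (2 : ℂ) ^ U * ((v : ℂ) ^ (U / 2 + ν - 1)
      * (1 - (v : ℂ)) ^ (1 - U - 1))) (Real.exp (-σ))) = sigmaFactor ν U σ := by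
  have hv : 0 < Real.exp (-σ) := Real.exp_pos _
  have hv1 : 0 < 1 - Real.exp (-σ) := by simpa using hσ
  have h4 : Real.log 4 = 2 * Real.log 2 := by
    rw [show (4 : ℝ) = 2 ^ 2 by norm_num, Real.log_pow]; norm_num
  have hb : Real.log (halfCosh σ) = σ + 2 * Real.log (1 - Real.exp (-σ)) - 2 * Real.log 2 := by
    have h : Real.exp σ * Real.exp (-σ) = 1 := by rw [← Real.exp_add]; simp
    have : halfCosh σ = Real.exp σ * (1 - Real.exp (-σ)) ^ 2 / 4 := by
      unfold halfCosh
      linear_combination (1 / 4 * (2 - Real.exp (-σ))) * h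
    rw [this, Real.log_div (by positivity) (by norm_num), Real.log_mul (by positivity)
      (by positivity), Real.log_exp, Real.log_pow, h4]
    push_cast
    ring
  have e : ∀ (r : ℝ) (_ : 0 < r) (s : ℂ), (r : ℂ) ^ s = cexp (Real.log r * s) := by
    intro r hr s
    rw [Complex.cpow_def_of_ne_zero (by exact_mod_cast hr.ne'), ← Complex.ofReal_log hr.le]
  unfold sigmaFactor
  rw [abs_neg, abs_of_pos hv, Complex.real_smul]
  simp only
  rw [e _ (halfCosh_pos hσ.ne'), e _ hv, show (2 : ℂ) = ((2 : ℝ) : ℂ) by norm_num,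
    e 2 (by norm_num), show (1 : ℂ) - ((Real.exp (-σ) : ℝ) : ℂ) = ((1 - Real.exp (-σ) : ℝ) : ℂ) by
      push_cast; ring, e _ hv1, hb, Real.log_exp, Complex.ofReal_exp, ← Complex.exp_add,
    ← Complex.exp_add, ← Complex.exp_add, ← Complex.exp_add]
  congr 1
  push_cast
  ring

lemma hasDerivWithinAt_exp_neg (σ : ℝ) (s : Set ℝ) :
    HasDerivWithinAt (fun σ : ℝ => Real.exp (-σ)) (-Real.exp (-σ)) s σ := by
  have := ((hasDerivAt_id σ).neg.exp).hasDerivWithinAt (s := s)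
  convert! this using 1
  simp

lemma injOn_exp_neg (s : Set ℝ) : InjOn (fun σ : ℝ => Real.exp (-σ)) s := fun a _ b _ h => by
  simpa using h

lemma integrableOn_sigmaFactor {ν U : ℂ} (h : 0 < (U / 2 + ν).re) (hU : U.re < 1) :
    IntegrableOn (sigmaFactor ν U) (Ioi 0) := by
  have hU' : 0 < (1 - U).re := by simpa using hU
  have hb := ((intervalIntegrable_iff_integrableOn_Ioo_of_le zero_le_one).1
    (Complex.betaIntegral_convergent h hU')).const_mul ((2 : ℂ) ^ U)
  have hb' : IntegrableOn (fun v : ℝ => (2 : ℂ) ^ U * ((v : ℂ) ^ (U / 2 + ν - 1)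
      * (1 - (v : ℂ)) ^ (1 - U - 1))) (Ioo 0 1) := hb
  rw [← image_exp_neg_Ioi, integrableOn_image_iff_integrableOn_abs_deriv_smul measurableSet_Ioi
    (fun σ _ => hasDerivWithinAt_exp_neg σ _) (injOn_exp_neg _)] at hb'
  exact hb'.congr_fun (fun σ hσ => sigmaFactor_subst ν U hσ) measurableSet_Ioi

lemma integral_sigmaFactor_Ioi (ν U : ℂ) :
    ∫ σ in Ioi (0 : ℝ), sigmaFactor ν U σ = 2 ^ U * Complex.betaIntegral (U / 2 + ν) (1 - U) := by
  rw [Complex.betaIntegral, intervalIntegral.integral_of_le zero_le_one,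
    integral_Ioc_eq_integral_Ioo, ← MeasureTheory.integral_const_mul, ← image_exp_neg_Ioi,
    integral_image_eq_integral_abs_deriv_smul measurableSet_Ioi
    (fun σ _ => hasDerivWithinAt_exp_neg σ _) (injOn_exp_neg _)]
  exact setIntegral_congr_fun measurableSet_Ioi fun σ hσ => (sigmaFactor_subst ν U hσ).symm

lemma integrable_sigmaFactor {ν U : ℂ} (h1 : 0 < ν.re) (h : 2 * ν.re < U.re) (hU : U.re < 1) :
    Integrable (sigmaFactor ν U) := by
  have i1 := integrableOn_sigmaFactor (ν := ν) (U := U) (by simp; linarith) hU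
  have i2 := (integrableOn_sigmaFactor (ν := -ν) (U := U) (by simp; linarith) hU).comp_neg
  simp_rw [sigmaFactor_neg, neg_neg, Set.neg_Ioi, neg_zero] at i2
  rw [← integrableOn_Iic_iff_integrableOn_Iio] at i2
  rw [← integrableOn_univ, ← Iic_union_Ioi (a := (0 : ℝ))]
  exact i2.union i1

lemma integral_sigmaFactor {ν U : ℂ} (h1 : 0 < ν.re) (h : 2 * ν.re < U.re) (hU : U.re < 1) :
    ∫ σ, sigmaFactor ν U σ = 2 ^ U * (Complex.betaIntegral (U / 2 + ν) (1 - U)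
      + Complex.betaIntegral (U / 2 - ν) (1 - U)) := by
  rw [← integral_add_compl (measurableSet_Iic (a := (0 : ℝ))) (integrable_sigmaFactor h1 h hU),
    compl_Iic, integral_sigmaFactor_Ioi]
  have e : ∫ σ in Iic (0 : ℝ), sigmaFactor ν U σ = ∫ σ in Ioi (0 : ℝ), sigmaFactor (-ν) U σ := by
    rw [show Ioi (0 : ℝ) = Ioi (-0) by simp, ← integral_comp_neg_Iic]
    simp_rw [sigmaFactor_neg, neg_neg]
  rw [e, integral_sigmaFactor_Ioi, ← sub_eq_add_neg]
  ring

lemma Gamma_mul_sin {z : ℂ} (h0 : 0 < z.re) (h1 : z.re < 1) :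
    Complex.Gamma z * Complex.Gamma (1 - z) * Complex.sin (Real.pi * z) = Real.pi := by
  have h := Complex.Gamma_mul_Gamma_one_sub z
  have hs : Complex.sin (Real.pi * z) ≠ 0 := by
    intro hs
    rw [hs, div_zero] at h
    exact mul_ne_zero (Complex.Gamma_ne_zero_of_re_pos h0)
      (Complex.Gamma_ne_zero_of_re_pos (by simpa using h1)) h
  rw [h, div_mul_cancel₀ _ hs]

/-- The two Beta functions combine through the reflection and duplication formulas. -/
lemma beta_add_beta {ν U : ℂ} (h1 : 0 < ν.re) (h : 2 * ν.re < U.re)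
    (hU : U.re < 1) :
    (Real.sqrt Real.pi : ℂ) * (1 / 2 * Complex.Gamma (U / 2) * (Complex.Gamma (U / 2)
      * (2 ^ U * (Complex.betaIntegral (U / 2 + ν) (1 - U)
        + Complex.betaIntegral (U / 2 - ν) (1 - U)))))
      = Complex.cos (Real.pi * ν) * Complex.Gamma (U / 2) * Complex.Gamma ((1 - U) / 2)
        * Complex.Gamma (U / 2 + ν) * Complex.Gamma (U / 2 - ν) := by
  have hpi : (Real.pi : ℂ) ≠ 0 := by exact_mod_cast Real.pi_ne_zero
  have hU' : 0 < (1 - U).re := by simpa using hU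
  have hp : 0 < (U / 2 + ν).re := by simp; linarith
  have hm : 0 < (U / 2 - ν).re := by simp; linarith
  have b1 := Complex.Gamma_mul_Gamma_eq_betaIntegral hp hU'
  have b2 := Complex.Gamma_mul_Gamma_eq_betaIntegral hm hU'
  rw [show U / 2 + ν + (1 - U) = 1 - (U / 2 - ν) by ring] at b1
  rw [show U / 2 - ν + (1 - U) = 1 - (U / 2 + ν) by ring] at b2
  have r1 := Gamma_mul_sin hm (by simp; linarith)
  have r2 := Gamma_mul_sin hp (by simp; linarith)
  have r3 := Gamma_mul_sin (z := U / 2) (by simp; linarith) (by simp; linarith)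
  have dup := Complex.Gamma_mul_Gamma_add_half ((1 - U) / 2)
  rw [show (1 - U) / 2 + 1 / 2 = 1 - U / 2 by ring, show 2 * ((1 - U) / 2) = 1 - U by ring,
    show 1 - (1 - U) = U by ring] at dup
  have s1 : Complex.sin (Real.pi * (U / 2 - ν)) + Complex.sin (Real.pi * (U / 2 + ν))
      = 2 * Complex.sin (Real.pi * (U / 2)) * Complex.cos (Real.pi * ν) := by
    rw [mul_sub, mul_add, Complex.sin_sub, Complex.sin_add]
    ring
  generalize Complex.betaIntegral (U / 2 + ν) (1 - U) = B1 at *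
  generalize Complex.betaIntegral (U / 2 - ν) (1 - U) = B2 at *
  have c1 : Real.pi * B1 = Complex.Gamma (U / 2 + ν) * Complex.Gamma (U / 2 - ν)
      * Complex.Gamma (1 - U) * Complex.sin (Real.pi * (U / 2 - ν)) := by
    linear_combination (-B1) * r1 - Complex.Gamma (U / 2 - ν)
      * Complex.sin (Real.pi * (U / 2 - ν)) * b1
  have c2 : Real.pi * B2 = Complex.Gamma (U / 2 + ν) * Complex.Gamma (U / 2 - ν)
      * Complex.Gamma (1 - U) * Complex.sin (Real.pi * (U / 2 + ν)) := by
    linear_combination (-B2) * r2 - Complex.Gamma (U / 2 + ν)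
      * Complex.sin (Real.pi * (U / 2 + ν)) * b2
  apply mul_left_cancel₀ hpi
  set S := (Real.sqrt Real.pi : ℂ)
  set G := Complex.Gamma (U / 2)
  set p := Complex.Gamma (U / 2 + ν)
  set m := Complex.Gamma (U / 2 - ν)
  linear_combination (S / 2 * G ^ 2 * 2 ^ U) * (c1 + c2)
    + (S / 2 * G ^ 2 * 2 ^ U * p * m * Complex.Gamma (1 - U)) * s1
    - (G ^ 2 * p * m * Complex.sin (Real.pi * (U / 2)) * Complex.cos (Real.pi * ν)) * dup
    + (G * p * m * Complex.Gamma ((1 - U) / 2) * Complex.cos (Real.pi * ν)) * r3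

lemma nicholsonKernel_mul_cpow (ν U : ℂ) (x : ℝ) (p : ℝ × ℝ) :
    (x : ℂ) ^ (U - 1) * nicholsonKernel ν 0 x p
      = cexp (-ν * p.1) * (Real.exp (-Real.exp p.2) : ℝ) * ((x : ℂ) ^ (U - 1)
        * (Real.exp (-(x ^ 2 * (halfCosh p.1 * Real.exp (-p.2)))) : ℝ)) := by
  unfold nicholsonKernel regParam
  rw [zero_pow two_ne_zero, zero_mul, add_zero, sub_eq_add_neg (-Real.exp p.2), Real.exp_add,
    mul_assoc (x ^ 2)]
  push_cast
  ring

lemma halfCosh_mul_exp_cpow (U : ℂ) (p : ℝ × ℝ) :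
    ((halfCosh p.1 * Real.exp (-p.2) : ℝ) : ℂ) ^ (-(U / 2))
      = (halfCosh p.1 : ℂ) ^ (-(U / 2)) * cexp (U / 2 * p.2) := by
  have h0 : ((Real.exp (-p.2) : ℝ) : ℂ) ≠ 0 := by exact_mod_cast (Real.exp_pos _).ne'
  rw [Complex.ofReal_mul, Complex.mul_cpow_ofReal_nonneg (halfCosh_nonneg _) (Real.exp_pos _).le,
    Complex.cpow_def_of_ne_zero h0, ← Complex.ofReal_log (Real.exp_pos _).le, Real.log_exp]
  congr 2
  push_cast
  ring

/-- For fixed `(σ, y)` the `x`-integral is Gaussian. It diverges at `σ = 0`, where the Gaussian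
parameter vanishes; that slice is a null set. -/
lemma integral_slice (ν : ℂ) {U : ℂ} (hU : 0 < U.re) {p : ℝ × ℝ} (hp : p.1 ≠ 0) :
    ∫ x in Ioi (0 : ℝ), (x : ℂ) ^ (U - 1) * nicholsonKernel ν 0 x p
      = 1 / 2 * Complex.Gamma (U / 2) * (sigmaFactor ν U p.1
        * cexp (-cexp p.2 + U / 2 * p.2)) := by
  have hk : 0 < halfCosh p.1 * Real.exp (-p.2) := mul_pos (halfCosh_pos hp) (Real.exp_pos _)
  simp_rw [nicholsonKernel_mul_cpow]
  rw [MeasureTheory.integral_const_mul, integral_gaussian_mellin hU hk, halfCosh_mul_exp_cpow,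
    Complex.exp_add (-cexp p.2)]
  unfold sigmaFactor
  push_cast
  ring

lemma ae_fst_ne_zero : ∀ᵐ p : ℝ × ℝ, p.1 ≠ 0 := by
  have h : ∀ᵐ σ : ℝ, σ ≠ 0 := by simp [ae_iff]
  exact Measure.quasiMeasurePreserving_fst.ae h

lemma integrable_slice_integral {ν U : ℂ} (h1 : 0 < ν.re) (h : 2 * ν.re < U.re) (hU : U.re < 1) :
    Integrable fun p : ℝ × ℝ => ∫ x in Ioi (0 : ℝ), (x : ℂ) ^ (U - 1) * nicholsonKernel ν 0 x p := by
  have hU0 : 0 < U.re := by linarith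
  have iy : Integrable fun y : ℝ => cexp (-cexp y + U / 2 * y) := by
    simpa using integrable_cexp_two (c := 1) (a := U / 2) (d := 0) (by simp) le_rfl
      (Or.inr (by simpa using hU0))
  have := ((integrable_sigmaFactor h1 h hU).mul_prod iy).const_mul (1 / 2 * Complex.Gamma (U / 2))
  refine this.congr ?_
  filter_upwards [ae_fst_ne_zero] with p hp
  rw [integral_slice ν hU0 hp]

/-- Passing to absolute values replaces the parameters by their real parts. -/
lemma norm_cpow_mul_nicholsonKernel (ν U : ℂ) {x : ℝ} (hx : 0 < x) (p : ℝ × ℝ) :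
    ((‖(x : ℂ) ^ (U - 1) * nicholsonKernel ν 0 x p‖ : ℝ) : ℂ)
      = (x : ℂ) ^ ((U.re : ℂ) - 1) * nicholsonKernel ν.re 0 x p := by
  rw [norm_mul, norm_nicholsonKernel, Complex.norm_cpow_eq_rpow_re_of_pos hx]
  unfold nicholsonKernel
  push_cast
  rw [Complex.ofReal_cpow hx.le]
  simp

/-- Absolute convergence of the triple integral. After taking absolute values, the `x`-integral is
the slice integral with the real parameters `Re ν`, `Re U`, whose integrability is known. -/
lemma integrable_triple {ν U : ℂ} (h1 : 0 < ν.re) (h : 2 * ν.re < U.re) (hU : U.re < 1) :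
    Integrable (fun q : ℝ × (ℝ × ℝ) => (q.1 : ℂ) ^ (U - 1) * nicholsonKernel ν 0 q.1 q.2)
      ((volume.restrict (Ioi 0)).prod volume) := by
  have hU0 : 0 < U.re := by linarith
  have hm : Measurable fun q : ℝ × (ℝ × ℝ) =>
      (q.1 : ℂ) ^ (U - 1) * nicholsonKernel ν 0 q.1 q.2 := by
    have c : Continuous fun q : ℝ × (ℝ × ℝ) => nicholsonKernel ν 0 q.1 q.2 := by
      unfold nicholsonKernel regParam
      have := continuous_halfCosh
      fun_prop
    exact ((Complex.measurable_ofReal.comp measurable_fst).pow_const _).mul c.measurable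
  rw [integrable_prod_iff' hm.aestronglyMeasurable]
  constructor
  · filter_upwards [ae_fst_ne_zero] with p hp
    have hk : 0 < halfCosh p.1 * Real.exp (-p.2) := mul_pos (halfCosh_pos hp) (Real.exp_pos _)
    simp_rw [nicholsonKernel_mul_cpow]
    exact (integrableOn_gaussian_mellin hU0 hk).const_mul _
  · have h3 := (integrable_slice_integral (ν := (ν.re : ℂ)) (U := (U.re : ℂ)) (by simpa using h1)
      (by simpa using h) (by simpa using hU)).re
    refine h3.congr (Eventually.of_forall fun p => ?_)
    have e : ∫ x in Ioi (0 : ℝ), (x : ℂ) ^ ((U.re : ℂ) - 1) * nicholsonKernel ν.re 0 x p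
        = ((∫ x in Ioi (0 : ℝ), ‖(x : ℂ) ^ (U - 1) * nicholsonKernel ν 0 x p‖ : ℝ) : ℂ) := by
      rw [← integral_complex_ofReal]
      exact setIntegral_congr_fun measurableSet_Ioi fun x hx =>
        (norm_cpow_mul_nicholsonKernel ν U hx p).symm
    simp only [e]
    exact Complex.ofReal_re _

/-- Nicholson's formula with the Mellin factor. Integrability of the slices in `(σ, y)` comes from
Fubini, hence the restriction to almost every `x`. -/
lemma integral_kernel_ae {ν U : ℂ} (h1 : 0 < ν.re) (h : 2 * ν.re < U.re) (hU : U.re < 1) :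
    ∀ᵐ x : ℝ ∂(volume.restrict (Ioi (0 : ℝ))), ∫ p, (x : ℂ) ^ (U - 1) * nicholsonKernel ν 0 x p
      = Real.pi ^ 2 * ((besselJ ν x ^ 2 + besselY ν x ^ 2) * (x : ℂ) ^ (U - 1)) := by
  filter_upwards [(integrable_triple h1 h hU).prod_right_ae, ae_restrict_mem measurableSet_Ioi]
    with x hx hx0
  have hx0 : 0 < x := hx0
  have hne : (x : ℂ) ^ (U - 1) ≠ 0 := by
    rw [Complex.cpow_ne_zero_iff]
    left
    exact_mod_cast hx0.ne'
  have hi : Integrable (nicholsonKernel ν 0 x) := by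
    refine (hx.const_mul ((x : ℂ) ^ (U - 1))⁻¹).congr (Eventually.of_forall fun p => ?_)
    simp only
    rw [inv_mul_cancel_left₀ hne]
  rw [MeasureTheory.integral_const_mul, nicholson h1 (by linarith) hx0 hi]
  ring

lemma integrableOn_weber {ν U : ℂ} (h1 : 0 < ν.re) (h : 2 * ν.re < U.re) (hU : U.re < 1) :
    IntegrableOn (fun x : ℝ => (besselJ ν x ^ 2 + besselY ν x ^ 2) * (x : ℂ) ^ (U - 1)) (Ioi 0) := by
  have hpi : (Real.pi : ℂ) ≠ 0 := by exact_mod_cast Real.pi_ne_zero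
  refine ((integrable_triple h1 h hU).integral_prod_left.const_mul (((Real.pi : ℂ) ^ 2)⁻¹)).congr ?_
  filter_upwards [integral_kernel_ae h1 h hU] with x hx
  rw [hx, inv_mul_cancel_left₀ (pow_ne_zero 2 hpi)]

/-- The Mellin transform of `J_ν² + Y_ν²`. -/
lemma mellin_weber {ν U : ℂ} (h1 : 0 < ν.re) (h : 2 * ν.re < U.re) (hU : U.re < 1) :
    (Real.sqrt Real.pi : ℂ) * (Real.pi ^ 2 *
      ∫ x in Ioi (0 : ℝ), (besselJ ν x ^ 2 + besselY ν x ^ 2) * (x : ℂ) ^ (U - 1))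
      = Complex.cos (Real.pi * ν) * Complex.Gamma (U / 2) * Complex.Gamma ((1 - U) / 2)
        * Complex.Gamma (U / 2 + ν) * Complex.Gamma (U / 2 - ν) := by
  have hU0 : 0 < U.re := by linarith
  rw [← beta_add_beta h1 h hU, ← MeasureTheory.integral_const_mul,
    ← integral_congr_ae (integral_kernel_ae h1 h hU),
    integral_integral_swap (integrable_triple h1 h hU), ← integral_sigmaFactor h1 h hU]
  congr 1
  have e : (fun p : ℝ × ℝ => ∫ x in Ioi (0 : ℝ), (x : ℂ) ^ (U - 1) * nicholsonKernel ν 0 x p)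
      =ᵐ[volume] fun p => 1 / 2 * Complex.Gamma (U / 2) * (sigmaFactor ν U p.1
        * cexp (-cexp p.2 + U / 2 * p.2)) := by
    filter_upwards [ae_fst_ne_zero] with p hp
    rw [integral_slice ν hU0 hp]
  rw [integral_congr_ae e, MeasureTheory.integral_const_mul, Measure.volume_eq_prod,
    integral_prod_mul (sigmaFactor ν U) (fun y : ℝ => cexp (-cexp y + U / 2 * y)),
    integral_exp_neg_exp (by simpa using hU0)]
  ring

/-! ### The Parseval identity -/

lemma integrableOn_weber_scaled {ν U : ℂ} {a : ℝ} (ha : 0 < a) (h1 : 0 < ν.re)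
    (h : 2 * ν.re < U.re) (hU : U.re < 1) :
    IntegrableOn (fun x : ℝ => (besselJ ν ((a * x : ℝ) : ℂ) ^ 2 + besselY ν ((a * x : ℝ) : ℂ) ^ 2)
      * (x : ℂ) ^ (U - 1)) (Ioi 0) := by
  have h0 := integrableOn_weber h1 h hU
  rw [← mul_zero a, ← integrableOn_Ioi_comp_mul_left_iff _ _ ha] at h0
  have ha0 : (a : ℂ) ^ (U - 1) ≠ 0 := by
    rw [Complex.cpow_ne_zero_iff]
    left
    exact_mod_cast ha.ne'
  have h3 := h0.const_mul ((a : ℂ) ^ (U - 1))⁻¹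
  refine IntegrableOn.congr_fun h3 (fun x hx => ?_) measurableSet_Ioi
  have hx : 0 < x := hx
  rw [Complex.ofReal_mul a x, Complex.mul_cpow_ofReal_nonneg ha.le hx.le]
  field_simp

lemma mellin_weber_scaled {ν U : ℂ} {a : ℝ} (ha : 0 < a) (h1 : 0 < ν.re)
    (h : 2 * ν.re < U.re) (hU : U.re < 1) :
    (Real.sqrt Real.pi : ℂ) * (Real.pi ^ 2 * ∫ x in Ioi (0 : ℝ),
      (besselJ ν ((a * x : ℝ) : ℂ) ^ 2 + besselY ν ((a * x : ℝ) : ℂ) ^ 2) * (x : ℂ) ^ (U - 1))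
      = Complex.cos (Real.pi * ν) * Complex.Gamma (U / 2) * Complex.Gamma ((1 - U) / 2)
        * Complex.Gamma (U / 2 + ν) * Complex.Gamma (U / 2 - ν) * (a : ℂ) ^ (-U) := by
  rw [← mellin_weber h1 h hU]
  have ha0 : (a : ℂ) ≠ 0 := by exact_mod_cast ha.ne'
  have hs := integral_comp_mul_left_Ioi
    (fun x : ℝ => (besselJ ν x ^ 2 + besselY ν x ^ 2) * (x : ℂ) ^ (U - 1)) 0 ha
  rw [mul_zero, Complex.real_smul] at hs
  have e : ∫ x in Ioi (0 : ℝ), (besselJ ν ((a * x : ℝ) : ℂ) ^ 2 + besselY ν ((a * x : ℝ) : ℂ) ^ 2)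
      * ((a * x : ℝ) : ℂ) ^ (U - 1) = (a : ℂ) ^ (U - 1) * ∫ x in Ioi (0 : ℝ),
      (besselJ ν ((a * x : ℝ) : ℂ) ^ 2 + besselY ν ((a * x : ℝ) : ℂ) ^ 2) * (x : ℂ) ^ (U - 1) := by
    rw [← MeasureTheory.integral_const_mul]
    refine setIntegral_congr_fun measurableSet_Ioi fun x hx => ?_
    have hx : 0 < x := hx
    rw [Complex.ofReal_mul a x, Complex.mul_cpow_ofReal_nonneg ha.le hx.le]
    ring
  rw [e, Complex.cpow_sub _ _ ha0, Complex.cpow_one] at hs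
  have hU0 : (a : ℂ) ^ U ≠ 0 := by
    rw [Complex.cpow_ne_zero_iff]
    exact Or.inl ha0
  generalize (∫ x in Ioi (0 : ℝ), (besselJ ν x ^ 2 + besselY ν x ^ 2) * (x : ℂ) ^ (U - 1)) = A at *
  generalize (∫ x in Ioi (0 : ℝ), (besselJ ν ((a * x : ℝ) : ℂ) ^ 2
    + besselY ν ((a * x : ℝ) : ℂ) ^ 2) * (x : ℂ) ^ (U - 1)) = B at *
  rw [Complex.cpow_neg]
  push_cast at hs
  field_simp at hs ⊢
  linear_combination hs

/-- Since `|s| ≥ |μ| > 0` on the line, `s · gs s ∈ L₁` forces `gs ∈ L₁`. -/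
lemma integrable_of_mellinClass {μ : ℝ} {g : ℝ → ℂ} {gs : ℂ → ℂ} (hμ : μ < 0)
    (hg : MellinClass01 μ g gs) : Integrable fun τ : ℝ => gs ((μ : ℂ) + τ * I) := by
  have hne : ∀ τ : ℝ, (μ : ℂ) + τ * I ≠ 0 := fun τ h => by
    have := congrArg Complex.re h
    simp at this
    exact hμ.ne this
  have hc : Continuous fun τ : ℝ => ((μ : ℂ) + τ * I)⁻¹ :=
    Continuous.inv₀ (by fun_prop) hne
  have h := hg.1.bdd_mul (c := |μ|⁻¹) hc.aestronglyMeasurable (Eventually.of_forall fun τ => by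
    rw [norm_inv]
    have h2 := Complex.abs_re_le_norm ((μ : ℂ) + τ * I)
    simp only [add_re, ofReal_re, mul_re, I_re, mul_zero, ofReal_im, I_im, mul_one, sub_zero,
      add_zero] at h2
    exact inv_anti₀ (abs_pos.2 hμ.ne) h2)
  refine h.congr (Eventually.of_forall fun τ => ?_)
  simp only
  rw [inv_mul_cancel_left₀ (hne τ)]

/-- Parseval-type identity: for `g ∈ 𝓜₀,₁⁻¹(L_c)` on the line `Re s = μ` and
`-1/2 > Re w > μ + 2 Re ν`,
`(cos(πν)/(2π³√π i)) ∫_{μ-i∞}^{μ+i∞} gs(s) Γ((1+s-w)/2) Γ((w-s)/2) Γ((w-s)/2 - ν)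
  Γ((w-s)/2 + ν) a^{s-w} ds = ∫_0^∞ g(x) [J_ν²(ax) + Y_ν²(ax)] x^{w-1} dx`. -/
theorem parseval_identity_weber (a : ℝ) (ν : ℂ) (μ : ℝ) (g : ℝ → ℂ) (gs : ℂ → ℂ) (w : ℂ)
    (ha : 0 < a) (hν₁ : 0 < ν.re) (hν₂ : ν.re < 1 / 2)
    (hμ₁ : -1 < μ) (hμ₂ : μ < 0) (hg : MellinClass01 μ g gs)
    (hw₁ : w.re < -(1 / 2)) (hw₂ : μ + 2 * ν.re < w.re) :
    Complex.cos (Real.pi * ν) /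
        (2 * (Real.pi : ℂ) ^ 3 * (Real.sqrt Real.pi : ℂ) * Complex.I) *
      (Complex.I * ∫ τ : ℝ,
        gs ((μ : ℂ) + τ * Complex.I) *
          Complex.Gamma ((1 + ((μ : ℂ) + τ * Complex.I) - w) / 2) *
          Complex.Gamma ((w - ((μ : ℂ) + τ * Complex.I)) / 2) *
          Complex.Gamma ((w - ((μ : ℂ) + τ * Complex.I)) / 2 - ν) *
          Complex.Gamma ((w - ((μ : ℂ) + τ * Complex.I)) / 2 + ν) *
          (a : ℂ) ^ (((μ : ℂ) + τ * Complex.I) - w)) =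
      ∫ x in Ioi (0 : ℝ),
        g x * (besselJ ν ((a * x : ℝ) : ℂ) ^ 2 + besselY ν ((a * x : ℝ) : ℂ) ^ 2) *
          (x : ℂ) ^ (w - 1) := by
  have hpi : (Real.pi : ℂ) ≠ 0 := by exact_mod_cast Real.pi_ne_zero
  have hsq : (Real.sqrt Real.pi : ℂ) ≠ 0 := by
    exact_mod_cast (Real.sqrt_pos.2 Real.pi_pos).ne'
  set W : ℝ → ℂ := fun x => besselJ ν ((a * x : ℝ) : ℂ) ^ 2 + besselY ν ((a * x : ℝ) : ℂ) ^ 2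
    with hW
  have hre : ∀ τ : ℝ, (w - ((μ : ℂ) + τ * I)).re = w.re - μ := fun τ => by simp
  have hgs := integrable_of_mellinClass hμ₂ hg
  have hWi : IntegrableOn (fun x : ℝ => W x * (x : ℂ) ^ (w - μ - 1)) (Ioi 0) :=
    integrableOn_weber_scaled (U := w - μ) ha hν₁ (by simp; linarith) (by simp; linarith)
  -- The integrand of the double integral. Splitting off `x ^ (-iτ)`, which has modulus one, leaves a
  -- product of a function of `x` and a function of `τ`, both integrable.
  set Φ : ℝ → ℝ → ℂ := fun x τ => cexp (-(τ * Real.log x * I))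
    * ((W x * (x : ℂ) ^ (w - μ - 1)) * gs ((μ : ℂ) + τ * I)) with hΦ
  have hΦi : Integrable (Function.uncurry Φ) ((volume.restrict (Ioi 0)).prod volume) := by
    refine (hWi.mul_prod hgs).bdd_mul (c := 1) (f := fun q : ℝ × ℝ =>
      cexp (-(q.2 * Real.log q.1 * I))) ?_ (Eventually.of_forall fun q => ?_)
    · have hm : Measurable fun q : ℝ × ℝ => cexp (-(q.2 * Real.log q.1 * I)) := by fun_prop
      exact hm.aestronglyMeasurable
    · rw [Complex.norm_exp]
      simp
  have hpow : ∀ x : ℝ, 0 < x → ∀ τ : ℝ, Φ x τ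
      = gs ((μ : ℂ) + τ * I) * (W x * (x : ℂ) ^ (w - ((μ : ℂ) + τ * I) - 1)) := by
    intro x hx τ
    have hx0 : (x : ℂ) ≠ 0 := by exact_mod_cast hx.ne'
    have e1 : cexp (-(τ * Real.log x * I)) = (x : ℂ) ^ (-(τ * I)) := by
      rw [Complex.cpow_def_of_ne_zero hx0, ← Complex.ofReal_log hx.le]
      congr 1
      ring
    rw [hΦ]
    simp only
    rw [e1, show w - ((μ : ℂ) + τ * I) - 1 = (w - μ - 1) + -(τ * I) by ring,
      Complex.cpow_add _ _ hx0]
    ring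
  have hrhs : ∫ x in Ioi (0 : ℝ), g x * W x * (x : ℂ) ^ (w - 1)
      = (2 * Real.pi : ℂ)⁻¹ * ∫ x in Ioi (0 : ℝ), ∫ τ, Φ x τ := by
    rw [← MeasureTheory.integral_const_mul]
    refine setIntegral_congr_fun measurableSet_Ioi fun x hx => ?_
    have hx : 0 < x := hx
    have hx0 : (x : ℂ) ≠ 0 := by exact_mod_cast hx.ne'
    rw [hg.2 x hx]
    have e2 : ∫ τ, Φ x τ = (∫ τ : ℝ, gs ((μ : ℂ) + τ * I) * (x : ℂ) ^ (-((μ : ℂ) + τ * I)))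
        * (W x * (x : ℂ) ^ (w - 1)) := by
      rw [← MeasureTheory.integral_mul_const]
      refine integral_congr_ae (Eventually.of_forall fun τ => ?_)
      simp only
      rw [hpow x hx, show w - ((μ : ℂ) + τ * I) - 1 = -((μ : ℂ) + τ * I) + (w - 1) by ring,
        Complex.cpow_add _ _ hx0]
      ring
    rw [e2]
    have := I_ne_zero
    field_simp
  rw [hrhs, integral_integral_swap hΦi, ← MeasureTheory.integral_const_mul,
    ← MeasureTheory.integral_const_mul, ← MeasureTheory.integral_const_mul]
  refine integral_congr_ae (Eventually.of_forall fun τ => ?_)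
  simp only
  have e3 : ∫ x in Ioi (0 : ℝ), Φ x τ = gs ((μ : ℂ) + τ * I)
      * ∫ x in Ioi (0 : ℝ), W x * (x : ℂ) ^ (w - ((μ : ℂ) + τ * I) - 1) := by
    rw [← MeasureTheory.integral_const_mul]
    exact setIntegral_congr_fun measurableSet_Ioi fun x hx => hpow x hx τ
  have hM := mellin_weber_scaled (U := w - ((μ : ℂ) + τ * I)) ha hν₁
    (by rw [hre]; linarith) (by rw [hre]; linarith)
  rw [e3]
  simp only [hW]
  generalize (∫ x in Ioi (0 : ℝ), (besselJ ν ((a * x : ℝ) : ℂ) ^ 2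
    + besselY ν ((a * x : ℝ) : ℂ) ^ 2) * (x : ℂ) ^ (w - ((μ : ℂ) + τ * I) - 1)) = A at *
  rw [show 1 + ((μ : ℂ) + τ * I) - w = 1 - (w - ((μ : ℂ) + τ * I)) by ring,
    show (μ : ℂ) + τ * I - w = -(w - ((μ : ℂ) + τ * I)) by ring]
  generalize w - ((μ : ℂ) + τ * I) = U at *
  have := I_ne_zero
  generalize gs ((μ : ℂ) + τ * I) = G at *
  generalize (a : ℂ) ^ (-U) = R at *
  generalize Complex.Gamma (U / 2 + ν) = p at *
  generalize Complex.Gamma (U / 2 - ν) = m at *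
  field_simp
  linear_combination (-G) * hM
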